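/- arXiv:0810.2325 — 2 statements merged into one kernel-verified Lean document; each statement's English description precedes it below -/
import Mathlib

section
/- Let p_1 < p_2 < ... denote the sequence of all primes. Then the limit as N → ∞ of (1/N) · ∑_{i=1}^N φ(p_i − 1)/(p_i − 1) exists and equals Artin's constant A = ∏_p (1 − 1/(p(p−1))). -/
open Filter

/-- Artin's constant `A = ∏_p (1 - 1/(p(p-1)))`, product over all primes. -/
noncomputable def artinConstant : ℝ :=
  ∏' p : Nat.Primes, (1 - 1 / (((p : ℕ) : ℝ) * (((p : ℕ) : ℝ) - 1)))

section partA
open Finset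
noncomputable def thAP (l n : ℕ) : ℝ :=
  ∑ p ∈ (Finset.range (n+1)).filter (fun p => p.Prime ∧ l ∣ p - 1), Real.log p

lemma ordCompl_dvd_prod (l M : ℕ) (hl : l.Prime) :
    (M.factorial / l ^ M.factorial.factorization l) ∣ ∏ m ∈ Finset.range M, (l * (m+1) + 1) := by
  set D := M.factorial / l ^ M.factorial.factorization l with hD
  have hco : Nat.Coprime l D := Nat.coprime_ordCompl hl (Nat.factorial_ne_zero M)
  have hDM : D ∣ M.factorial := Nat.ordCompl_dvd _ _
  have hDpos : D ≠ 0 := (Nat.ordCompl_pos l (Nat.factorial_ne_zero M)).ne'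
  obtain ⟨u, hu⟩ : ∃ u : ℕ, l * u ≡ 1 [MOD D] := by
    obtain ⟨u, hu⟩ := (Nat.isCoprime_iff_coprime.2 hco)
    have : NeZero D := ⟨hDpos⟩
    refine ⟨((l : ZMod D)⁻¹).val, ?_⟩
    rw [← ZMod.natCast_eq_natCast_iff]
    push_cast
    rw [ZMod.natCast_val, ZMod.cast_id, ZMod.coe_mul_inv_eq_one _ hco]
  have hcu : Nat.Coprime D (l^M) := hco.symm.pow_right M
  have h1 : (∏ m ∈ Finset.range M, (l * (m+1) + 1)) ≡ l^M * ∏ m ∈ Finset.range M, (u + 1 + m) [MOD D] := by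
    rw [← Finset.card_range M, ← Finset.prod_const, Finset.card_range, ← Finset.prod_mul_distrib,
      ← ZMod.natCast_eq_natCast_iff]
    rw [← ZMod.natCast_eq_natCast_iff] at hu
    push_cast at hu ⊢
    refine Finset.prod_congr rfl fun m _ => ?_
    linear_combination -hu
  rw [Nat.ModEq.dvd_iff h1 dvd_rfl, ← Nat.ascFactorial_eq_prod_range]
  exact (hDM.trans (Nat.factorial_dvd_ascFactorial _ _)).mul_left _

lemma thAP_step (l n : ℕ) (hl : l.Prime) : thAP l n ≤ thAP l (n/l) + 3 * (n/l : ℕ) * Real.log l := by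
  set M := n / l with hM
  set P := (Finset.range (n+1)).filter (fun p => (p.Prime ∧ l ∣ p - 1) ∧ M < p) with hP
  set Q := ∏ m ∈ Finset.range M, (l * (m+1) + 1) with hQ
  set v := M.factorial.factorization l
  set D := M.factorial / l ^ v with hD
  have hl2 := hl.two_le
  have hPQ : (∏ p ∈ P, p) ∣ Q := by
    apply Finset.prod_primes_dvd
    · intro p hp; simp only [hP, mem_filter] at hp; exact hp.2.1.1.prime
    · intro p hp
      simp only [hP, mem_filter, mem_range] at hp
      obtain ⟨hpn, ⟨hpp, k, hk⟩, -⟩ := hp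
      have := hpp.two_le
      have hk0 : k ≠ 0 := by rintro rfl; simp at hk; omega
      obtain ⟨m, rfl⟩ := Nat.exists_eq_succ_of_ne_zero hk0
      have hmM : m < M := by
        rw [hM, Nat.lt_iff_add_one_le, Nat.le_div_iff_mul_le (by omega), mul_comm]
        simp only [Nat.succ_eq_add_one] at hk; omega
      have : p = l * (m+1) + 1 := by simp only [Nat.succ_eq_add_one] at hk; omega
      rw [this]
      exact Finset.dvd_prod_of_mem (fun m => l*(m+1)+1) (mem_range.2 hmM)
  have hcop : Nat.Coprime (∏ p ∈ P, p) D := by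
    refine Nat.Coprime.prod_left fun p hp => ?_
    simp only [hP, mem_filter] at hp
    refine Nat.Coprime.of_dvd_right (Nat.ordCompl_dvd _ _) ?_
    rw [Nat.coprime_comm]
    exact (Nat.Prime.coprime_iff_not_dvd hp.2.1.1).2 (fun h => by
      have := (hp.2.1.1.dvd_factorial).1 h; omega) |>.symm
  have hdiv := hcop.mul_dvd_of_dvd_of_dvd hPQ (ordCompl_dvd_prod l M hl)
  have hQpos : 0 < Q := Finset.prod_pos fun _ _ => by positivity
  have hle := Nat.le_of_dvd hQpos hdiv
  have hDf : l ^ v * D = M.factorial := Nat.ordProj_mul_ordCompl_eq_self _ _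
  have hv : v ≤ M := by
    have h := Nat.factorization_factorial_le_div_pred hl M
    exact h.trans (Nat.div_le_self _ _)
  have hQle : Q ≤ (l+1)^M * M.factorial := by
    rw [hQ, ← Finset.prod_range_add_one_eq_factorial]
    conv_rhs => rw [← Finset.card_range M, ← Finset.prod_const, Finset.card_range, ← Finset.prod_mul_distrib]
    exact Finset.prod_le_prod' fun m _ => by nlinarith
  have hfin : (∏ p ∈ P, p) ≤ (l+1)^M * l^M := by
    have hDpos : 0 < D := Nat.ordCompl_pos l (Nat.factorial_ne_zero M)
    have : (∏ p ∈ P, p) * D ≤ ((l+1)^M * l^M) * D := by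
      calc _ ≤ (l+1)^M * M.factorial := hle.trans hQle
        _ = (l+1)^M * (l^v * D) := by rw [hDf]
        _ ≤ (l+1)^M * (l^M * D) := by gcongr; omega
        _ = _ := by ring
    exact Nat.le_of_mul_le_mul_right this hDpos
  have hfin2 : (∏ p ∈ P, p) ≤ l^(3*M) := by
    refine hfin.trans ?_
    calc (l+1)^M * l^M ≤ (l^2)^M * l^M := by gcongr; nlinarith
      _ = _ := by ring
  have hlog : ∑ p ∈ P, Real.log p ≤ 3 * M * Real.log l := by
    rw [← Real.log_prod]
    · have : ((∏ p ∈ P, p : ℕ) : ℝ) ≤ ((l^(3*M) : ℕ) : ℝ) := by exact_mod_cast hfin2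
      push_cast at this
      have h2 := Real.log_le_log (by
        refine Finset.prod_pos fun p hp => ?_
        simp only [hP, mem_filter] at hp
        exact_mod_cast hp.2.1.1.pos) this
      rw [Real.log_pow] at h2
      push_cast at h2; exact h2
    · intro p hp
      simp only [hP, mem_filter] at hp
      exact_mod_cast hp.2.1.1.ne_zero
  have hsplit : thAP l n = thAP l M + ∑ p ∈ P, Real.log p := by
    unfold thAP
    rw [← Finset.sum_filter_add_sum_filter_not _ (fun p => ¬ M < p)]
    congr 1
    · apply Finset.sum_congr _ (fun _ _ => rfl)
      ext p; simp only [mem_filter, mem_range]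
      have : M ≤ n := Nat.div_le_self _ _
      constructor
      · rintro ⟨⟨a, b⟩, c⟩; exact ⟨by omega, b⟩
      · rintro ⟨a, b⟩; exact ⟨⟨by omega, b⟩, by omega⟩
    · apply Finset.sum_congr _ (fun _ _ => rfl)
      ext p; simp only [hP, mem_filter, mem_range, not_not]; tauto
  rw [hsplit]; gcongr

lemma thAP_le (l n : ℕ) (hl : l.Prime) : thAP l n ≤ 6 * n * (Real.log l / l) := by
  have hl2 : (2:ℝ) ≤ l := by exact_mod_cast hl.two_le
  have hlog : 0 ≤ Real.log l := Real.log_nonneg (by linarith)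
  induction n using Nat.strong_induction_on with
  | _ n ih =>
    rcases Nat.eq_zero_or_pos n with rfl | hn
    · simp [thAP, Finset.filter_singleton, Nat.not_prime_zero]
    · have h1 := ih (n/l) (Nat.div_lt_self hn hl.one_lt)
      have h2 := thAP_step l n hl
      have h3 : ((n/l : ℕ) : ℝ) ≤ n / l := Nat.cast_div_le
      have h4 : 6 * ((n/l : ℕ):ℝ) * (Real.log l / l) ≤ 3 * ((n/l : ℕ):ℝ) * Real.log l := by
        rw [mul_div_assoc', div_le_iff₀ (by linarith)]
        have : 0 ≤ ((n/l : ℕ):ℝ) * Real.log l := by positivity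
        nlinarith
      calc thAP l n ≤ 6 * ((n/l : ℕ):ℝ) * Real.log l := by linarith
        _ ≤ 6 * (n/l) * Real.log l := by gcongr
        _ = _ := by ring

end partA

section partD
open Filter Topology MeasureTheory
open scoped FourierTransform

lemma exists_kernel : ∃ (h : ℝ → ℂ) (k : ℝ → ℝ), Continuous h ∧ HasCompactSupport h ∧
    (∀ x, 0 ≤ k x) ∧ Integrable k ∧ ∫ x, k x = 1 ∧ ∀ u, 𝓕 h u = (k u : ℂ) := by
  let φ : ContDiffBump (0:ℝ) := ⟨1, 2, one_pos, one_lt_two⟩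
  let g : ℝ → ℂ := fun x => (φ x : ℂ)
  have hg1 : HasCompactSupport g := by
    have h1 : HasCompactSupport (φ : ℝ → ℝ) := φ.hasCompactSupport
    exact h1.comp_left (g := Complex.ofReal) Complex.ofReal_zero
  have hg2 : ContDiff ℝ (⊤ : ℕ∞) g := Complex.ofRealCLM.contDiff.comp φ.contDiff
  have hgc : Continuous g := hg2.continuous
  have hgi : Integrable g := hgc.integrable_of_hasCompactSupport hg1
  let G : SchwartzMap ℝ ℂ := hg1.toSchwartzMap hg2
  have hG : (𝓕 g) = ((𝓕 G : SchwartzMap ℝ ℂ) : ℝ → ℂ) := by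
    rw [SchwartzMap.fourier_coe]; rfl
  have hreal : ∀ u, (starRingEnd ℂ) (𝓕 g u) = 𝓕 g u := by
    intro u
    rw [Real.fourier_real_eq_integral_exp_smul, ← integral_conj, ← integral_neg_eq_self]
    congr 1
    ext v
    have : φ (-v) = φ v := φ.neg v
    have h2 : (starRingEnd ℂ) 2 = 2 := Complex.conj_ofNat 2
    simp [g, this, ← Complex.exp_conj, h2]
  let r : ℝ → ℝ := fun u => (𝓕 g u).re
  have hr : ∀ u, 𝓕 g u = (r u : ℂ) := fun u => (Complex.conj_eq_iff_re.1 (hreal u)).symm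
  have hrc : Continuous r := by
    have : Continuous (𝓕 g) := by rw [hG]; exact SchwartzMap.continuous _
    exact Complex.continuous_re.comp this
  have hri : Integrable (fun u => r u ^ 2) := by
    have := (SchwartzMap.memLp (𝓕 G : SchwartzMap ℝ ℂ) 2 volume).integrable_norm_pow (by norm_num)
    rw [← hG] at this
    refine this.congr (Eventually.of_forall fun u => ?_)
    simp [hr]
  have hr0 : r 0 ≠ 0 := by
    have h0 : 𝓕 g 0 = ((∫ x, φ x : ℝ) : ℂ) := by
      rw [Real.fourier_real_eq_integral_exp_smul]
      have h3 : ∀ v : ℝ, Complex.exp ((-2 * Real.pi * v * 0 : ℝ) * Complex.I) • g v = ((φ v : ℝ) : ℂ) := by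
        intro v; simp [g]
      simp_rw [h3]
      exact integral_ofReal
    have := φ.integral_pos (μ := volume)
    have h1 : r 0 = ∫ x, φ x := by
      have := (hr 0).symm.trans h0; exact_mod_cast this
    rw [h1]; exact this.ne'
  have hI : 0 < ∫ u, r u ^ 2 :=
    integral_pos_of_integrable_nonneg_nonzero (x := 0) (hrc.pow 2) hri (fun _ => sq_nonneg _)
      (pow_ne_zero 2 hr0)
  set I := ∫ u, r u ^ 2 with hIdef
  have hfou := fun u => Real.fourier_mul_convolution_eq hgi hgi u
  have hccont : Continuous (convolution g g (ContinuousLinearMap.mul ℂ ℂ) volume) :=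
    HasCompactSupport.continuous_convolution_right _ hg1 hgi.locallyIntegrable hgc
  have hcsupp : HasCompactSupport (convolution g g (ContinuousLinearMap.mul ℂ ℂ) volume) :=
    HasCompactSupport.convolution _ hg1 hg1
  generalize convolution g g (ContinuousLinearMap.mul ℂ ℂ) volume = cv at *
  clear_value I r G g
  refine ⟨fun t => (I⁻¹ : ℂ) * cv t,
    fun u => I⁻¹ * r u ^ 2, ?_, ?_, ?_, ?_, ?_, ?_⟩
  · exact continuous_const.mul hccont
  · exact hcsupp.mul_left
  · exact fun x => mul_nonneg (inv_nonneg.2 hI.le) (sq_nonneg _)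
  · exact hri.const_mul _
  · rw [integral_const_mul, ← hIdef, inv_mul_cancel₀ hI.ne']
  · intro u
    have := hfou u
    rw [Real.fourier_real_eq_integral_exp_smul] at this ⊢
    simp only [smul_eq_mul] at this ⊢
    simp_rw [mul_left_comm _ (I⁻¹:ℂ)]
    rw [integral_const_mul, this, hr]
    push_cast
    ring

lemma wiener (B : ℝ → ℝ) (hBm : Measurable B) (K : ℝ) (hK : ∀ u, |B u| ≤ K)
    (hB0 : ∀ u < 0, B u = 0) (H : ℂ → ℂ) (hH : ContinuousOn H {z | 0 ≤ z.re})
    (hBH : ∀ δ > (0:ℝ), ∀ t : ℝ, 𝓕 (fun u : ℝ => ((B u * Real.exp (-δ * u) : ℝ) : ℂ)) t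
      = H (δ + (2 * Real.pi * t : ℝ) * Complex.I))
    (h : ℝ → ℂ) (hc : Continuous h) (hs : HasCompactSupport h) (hk : Integrable (𝓕 h)) :
    Tendsto (fun y : ℝ => ∫ u, (B u : ℂ) * 𝓕 h (u - y)) atTop (𝓝 0) := by
  have hK0 : 0 ≤ K := (abs_nonneg _).trans (hK 0)
  have hhi : Integrable h := hc.integrable_of_hasCompactSupport hs
  have hIntg : ∀ δ > (0:ℝ), Integrable (fun u : ℝ => ((B u * Real.exp (-δ * u) : ℝ) : ℂ)) := by
    intro δ hδ
    suffices hs : Integrable (fun u : ℝ => B u * Real.exp (-δ * u)) from hs.ofReal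
    have h1 : IntegrableOn (fun u : ℝ => Real.exp (-δ * u)) (Set.Ici 0) := by
      rw [integrableOn_Ici_iff_integrableOn_Ioi]
      exact exp_neg_integrableOn_Ioi 0 hδ
    have h2 : IntegrableOn (fun u : ℝ => B u * Real.exp (-δ * u)) (Set.Ici 0) :=
      h1.bdd_mul (c := K) hBm.aestronglyMeasurable (Eventually.of_forall fun u => hK u)
    rw [← integrable_indicator_iff measurableSet_Ici] at h2
    have h3 : (fun u : ℝ => B u * Real.exp (-δ * u)) =
        (Set.Ici 0).indicator (fun u : ℝ => B u * Real.exp (-δ * u)) := by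
      ext u
      by_cases hu : 0 ≤ u
      · simp [Set.indicator, hu]
      · simp [Set.indicator, hu, hB0 u (not_le.1 hu)]
    rw [h3]; exact h2
  let e : ℝ → ℝ → ℂ := fun y t => Complex.exp ((2 * Real.pi * y * t : ℝ) * Complex.I)
  have hen : ∀ y t, ‖e y t‖ = 1 := fun y t => Complex.norm_exp_ofReal_mul_I _
  have hec : ∀ y, Continuous (e y) := fun y => by fun_prop
  have hei : ∀ y, Integrable (fun t => e y t * h t) := fun y =>
    hhi.bdd_mul (c := 1) (hec y).aestronglyMeasurable
      (Eventually.of_forall fun t => (hen y t).le)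
  have hshift : ∀ y u, 𝓕 (fun t => e y t * h t) u = 𝓕 h (u - y) := by
    intro y u
    rw [Real.fourier_real_eq_integral_exp_smul, Real.fourier_real_eq_integral_exp_smul]
    congr 1
    ext t
    simp only [smul_eq_mul, e]
    rw [← mul_assoc, ← Complex.exp_add]
    congr 2
    push_cast; ring
  have key1 : ∀ y, ∀ δ > (0:ℝ), ∫ t : ℝ, H (δ + (2 * Real.pi * t : ℝ) * Complex.I) * (e y t * h t)
      = ∫ u : ℝ, ((B u * Real.exp (-δ * u) : ℝ) : ℂ) * 𝓕 h (u - y) := by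
    intro y δ hδ
    have := VectorFourier.integral_fourierIntegral_smul_eq_flip (L := innerₗ ℝ)
      (μ := volume) (ν := volume)
      Real.continuous_fourierChar continuous_inner (hIntg δ hδ) (hei y)
    simp only [flip_innerₗ] at this
    change ∫ t, 𝓕 (fun u : ℝ => ((B u * Real.exp (-δ * u) : ℝ) : ℂ)) t • (e y t * h t) =
      ∫ u, ((B u * Real.exp (-δ * u) : ℝ) : ℂ) • 𝓕 (fun t => e y t * h t) u at this
    simp only [hBH δ hδ, hshift, smul_eq_mul] at this
    exact this
  have key2 : ∀ y, ∫ t : ℝ, H ((2 * Real.pi * t : ℝ) * Complex.I) * (e y t * h t)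
      = ∫ u : ℝ, (B u : ℂ) * 𝓕 h (u - y) := by
    intro y
    have L1 : Tendsto (fun δ : ℝ => ∫ t : ℝ, H (δ + (2 * Real.pi * t : ℝ) * Complex.I) * (e y t * h t))
        (𝓝[>] 0) (𝓝 (∫ t : ℝ, H ((2 * Real.pi * t : ℝ) * Complex.I) * (e y t * h t))) := by
      let Φ : ℝ × ℝ → ℂ := fun p => p.1 + (2 * Real.pi * p.2 : ℝ) * Complex.I
      have hΦ : Continuous Φ := by fun_prop
      have hcomp : IsCompact (Φ '' (Set.Icc 0 1 ×ˢ tsupport h)) :=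
        (isCompact_Icc.prod hs).image hΦ
      have hsub : Φ '' (Set.Icc 0 1 ×ˢ tsupport h) ⊆ {z | 0 ≤ z.re} := by
        rintro _ ⟨p, hp, rfl⟩
        simp [Φ]; exact hp.1.1
      obtain ⟨C, hC⟩ := hcomp.exists_bound_of_continuousOn (hH.mono hsub)
      refine tendsto_integral_filter_of_dominated_convergence (fun t => C * ‖h t‖) ?_ ?_ ?_ ?_
      · filter_upwards [self_mem_nhdsWithin] with δ hδ
        refine Continuous.aestronglyMeasurable ?_
        refine Continuous.mul ?_ ((hec y).mul hc)
        refine hH.comp_continuous (by fun_prop) (fun t => ?_)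
        simp; exact (le_of_lt hδ)
      · filter_upwards [Ioo_mem_nhdsGT (zero_lt_one (α := ℝ))] with δ hδ
        refine Eventually.of_forall fun t => ?_
        by_cases ht : t ∈ tsupport h
        · rw [norm_mul, norm_mul, hen, one_mul]
          gcongr
          exact hC _ ⟨(δ, t), ⟨⟨hδ.1.le, hδ.2.le⟩, ht⟩, rfl⟩
        · simp [image_eq_zero_of_notMem_tsupport ht]
      · exact hhi.norm.const_mul _
      · refine Eventually.of_forall fun t => ?_
        refine Tendsto.mul_const _ ?_
        have hcw := hH ((2 * Real.pi * t : ℝ) * Complex.I) (by simp)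
        refine Tendsto.comp hcw ?_
        refine tendsto_nhdsWithin_iff.2 ⟨?_, ?_⟩
        · have : Continuous (fun δ : ℝ => (δ:ℂ) + (2 * Real.pi * t : ℝ) * Complex.I) := by fun_prop
          have := this.tendsto 0
          simp only [Complex.ofReal_zero, zero_add] at this
          exact this.mono_left nhdsWithin_le_nhds
        · filter_upwards [self_mem_nhdsWithin] with δ hδ
          simp; exact (le_of_lt hδ)
    have L2 : Tendsto (fun δ : ℝ => ∫ u : ℝ, ((B u * Real.exp (-δ * u) : ℝ) : ℂ) * 𝓕 h (u - y))
        (𝓝[>] 0) (𝓝 (∫ u : ℝ, (B u : ℂ) * 𝓕 h (u - y))) := by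
      have hki : Integrable (fun u => 𝓕 h (u - y)) := hk.comp_sub_right y
      refine tendsto_integral_filter_of_dominated_convergence (fun u => K * ‖𝓕 h (u - y)‖) ?_ ?_ ?_ ?_
      · filter_upwards [self_mem_nhdsWithin] with δ hδ
        exact (hIntg δ hδ).aestronglyMeasurable.mul hki.aestronglyMeasurable
      · filter_upwards [self_mem_nhdsWithin] with δ hδ
        refine Eventually.of_forall fun u => ?_
        rw [norm_mul]
        gcongr
        rw [Complex.norm_real, norm_mul, Real.norm_eq_abs, Real.norm_eq_abs, Real.abs_exp]
        by_cases hu : u < 0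
        · simp [hB0 u hu, hK0]
        · have : Real.exp (-δ * u) ≤ 1 := by
            rw [Real.exp_le_one_iff]
            have : 0 < δ := hδ
            push Not at hu
            nlinarith [mul_nonneg this.le hu]
          nlinarith [abs_nonneg (B u), hK u, Real.exp_pos (-δ * u)]
      · exact hki.norm.const_mul _
      · refine Eventually.of_forall fun u => ?_
        refine Tendsto.mul_const _ ?_
        have : Continuous (fun δ : ℝ => ((B u * Real.exp (-δ * u) : ℝ) : ℂ)) := by fun_prop
        have := this.tendsto 0
        simp only [neg_zero, zero_mul, Real.exp_zero, mul_one] at this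
        exact this.mono_left nhdsWithin_le_nhds
    refine tendsto_nhds_unique (L1.congr' ?_) L2
    filter_upwards [self_mem_nhdsWithin] with δ hδ using key1 y δ hδ
  simp_rw [← key2]
  have RL := Real.zero_at_infty_fourier (fun t : ℝ => H ((2 * Real.pi * t : ℝ) * Complex.I) * h t)
  have hneg : Tendsto (fun y : ℝ => -y) atTop (cocompact ℝ) := by
    rw [cocompact_eq_atBot_atTop]
    exact tendsto_neg_atTop_atBot.mono_right le_sup_left
  refine (RL.comp hneg).congr fun y => ?_
  simp only [Function.comp]
  rw [Real.fourier_real_eq_integral_exp_smul]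
  congr 1
  ext t
  simp only [smul_eq_mul, e]
  rw [mul_left_comm]
  congr 4
  push_cast; ring

lemma exists_kernel_scaled : ∃ (k : ℝ → ℝ), (∀ x, 0 ≤ k x) ∧ Integrable k ∧ ∫ x, k x = 1 ∧
    ∀ (B : ℝ → ℝ) (_ : Measurable B) (K : ℝ) (_ : ∀ u, |B u| ≤ K)
    (_ : ∀ u < 0, B u = 0) (H : ℂ → ℂ) (_ : ContinuousOn H {z | 0 ≤ z.re})
    (_ : ∀ δ > (0:ℝ), ∀ t : ℝ, 𝓕 (fun u : ℝ => ((B u * Real.exp (-δ * u) : ℝ) : ℂ)) t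
      = H (δ + (2 * Real.pi * t : ℝ) * Complex.I)) (l : ℝ) (_ : 0 < l),
      Tendsto (fun y : ℝ => ∫ v, B (y + v / l) * k v) atTop (𝓝 0) := by
  obtain ⟨h, k, hc, hs, hk0, hki, hk1, hF⟩ := exists_kernel
  refine ⟨k, hk0, hki, hk1, ?_⟩
  intro B hBm K hK hB0 H hH hBH l hl
  have hF2 : ∀ u, 𝓕 (fun t => h (t / l)) u = ((l * k (l * u) : ℝ) : ℂ) := by
    intro u
    have h1 := hF (l * u)
    rw [Real.fourier_real_eq_integral_exp_smul] at h1 ⊢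
    have h2 := Measure.integral_comp_div
      (fun t : ℝ => Complex.exp ((-2 * Real.pi * t * (l * u) : ℝ) * Complex.I) • h t) l
    rw [h1] at h2
    rw [abs_of_pos hl] at h2
    push_cast
    rw [Complex.real_smul] at h2
    rw [← h2]
    congr 1
    ext t
    congr 4
    push_cast
    have hlc : (l : ℂ) ≠ 0 := by exact_mod_cast hl.ne'
    field_simp
  have hIntg : Integrable (𝓕 (fun t => h (t / l))) := by
    have h3 : Integrable (fun u => l * k (l * u)) := (hki.comp_mul_left' hl.ne').const_mul l
    have h4 : 𝓕 (fun t => h (t / l)) = fun u => ((l * k (l * u) : ℝ) : ℂ) := funext hF2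
    rw [h4]; exact h3.ofReal
  have hcs : HasCompactSupport (fun t => h (t / l)) := by
    have := hs.comp_homeomorph (Homeomorph.mulRight₀ (l⁻¹) (inv_ne_zero hl.ne'))
    exact this
  have hw := wiener B hBm K hK hB0 H hH hBH (fun t => h (t / l)) (by fun_prop) hcs hIntg
  have heq : ∀ y : ℝ, ∫ u, (B u : ℂ) * 𝓕 (fun t => h (t / l)) (u - y) =
      ((∫ v, B (y + v / l) * k v : ℝ) : ℂ) := by
    intro y
    simp_rw [hF2]
    have h5 : ∀ u, (B u : ℂ) * ((l * k (l * (u - y)) : ℝ) : ℂ) = ((B u * (l * k (l * (u - y))) : ℝ) : ℂ) := by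
      intro u; push_cast; ring
    simp_rw [h5]
    refine Eq.trans (integral_ofReal (f := fun u : ℝ => B u * (l * k (l * (u - y))))) ?_
    congr 1
    have h6 := Measure.integral_comp_div (fun w : ℝ => B (y + w) * k (l * w)) l
    have h7 := integral_add_left_eq_self (μ := volume) (fun u : ℝ => B u * (l * k (l * (u - y)))) y
    rw [← h7]
    have h8 : ∀ v : ℝ, B (y + v / l) * k (l * (v / l)) = B (y + v / l) * k v := by
      intro v; congr 2; field_simp
    simp_rw [h8] at h6
    rw [h6, abs_of_pos hl, smul_eq_mul, ← integral_const_mul]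
    congr 1; ext w
    rw [add_sub_cancel_left]; ring
  simp_rw [heq] at hw
  have hre := (Complex.continuous_re.tendsto 0).comp hw
  simpa [Function.comp_def] using hre

lemma tauber_aux (b : ℝ → ℝ) (hbm : Measurable b) (c M : ℝ) (hb0 : ∀ u, 0 ≤ b u)
    (hbM : ∀ u, b u ≤ M) (hmono : ∀ u v, 0 ≤ u → u ≤ v → b u ≤ b v * Real.exp (v - u))
    (k : ℝ → ℝ) (hk0 : ∀ x, 0 ≤ k x) (hki : Integrable k) (hk1 : ∫ x, k x = 1)
    (hlim : ∀ l > 0, Tendsto (fun y : ℝ => ∫ v, b (y + v / l) * k v) atTop (𝓝 c)) :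
    Tendsto b atTop (𝓝 c) := by
  have hM0 : 0 ≤ M := (hb0 0).trans (hbM 0)
  have hc0 : 0 ≤ c := ge_of_tendsto' (hlim 1 one_pos)
    (fun y => integral_nonneg fun v => mul_nonneg (hb0 _) (hk0 _))
  let m : ℝ → ℝ := fun η => ∫ v in Set.Ioc (-(1/η)) (1/η), k v
  have hm : Tendsto m (𝓝[>] 0) (𝓝 1) := by
    have h1 : Tendsto (fun η : ℝ => 1/η) (𝓝[>] 0) atTop := by
      simp only [one_div]; exact tendsto_inv_nhdsGT_zero
    have h2 : Tendsto (fun η : ℝ => ∫ v in (-(1/η))..(1/η), k v) (𝓝[>] 0) (𝓝 (∫ v, k v)) :=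
      intervalIntegral_tendsto_integral hki (tendsto_neg_atTop_atBot.comp h1) h1
    rw [hk1] at h2
    refine h2.congr' ?_
    filter_upwards [self_mem_nhdsWithin] with η hη
    have : 0 < 1/η := one_div_pos.2 hη
    rw [intervalIntegral.integral_of_le (by linarith)]
  have hbk : ∀ (l y : ℝ), Integrable (fun v => b (y + v / l) * k v) := fun l y =>
    hki.bdd_mul (c := M) (hbm.comp (by fun_prop)).aestronglyMeasurable
      (Eventually.of_forall fun v => by
        rw [Real.norm_eq_abs, abs_of_nonneg (hb0 _)]; exact hbM _)
  -- for |v| ≤ 1/η and l = 1/η^2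
  have hrange : ∀ η > (0:ℝ), ∀ v ∈ Set.Ioc (-(1/η)) (1/η), -η ≤ v / (1/η^2) ∧ v / (1/η^2) ≤ η := by
    intro η hη v hv
    have h1 : v / (1/η^2) = v * η * η := by field_simp
    rw [h1]
    have h2 : -1 ≤ v * η := by
      have := mul_le_mul_of_nonneg_right hv.1.le hη.le
      rwa [neg_mul, one_div_mul_cancel hη.ne'] at this
    have h3 : v * η ≤ 1 := by
      have := mul_le_mul_of_nonneg_right hv.2 hη.le
      rwa [one_div_mul_cancel hη.ne'] at this
    constructor <;> nlinarith
  have hup : ∀ η > (0:ℝ), ∀ᶠ z in atTop, b z * Real.exp (-(2*η)) * m η ≤ c + η := by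
    intro η hη
    have hl : 0 < 1/η^2 := by positivity
    have h1 := (hlim _ hl).eventually (gt_mem_nhds (show c < c + η by linarith))
    have h2 : Tendsto (fun z : ℝ => z + η) atTop atTop := tendsto_atTop_add_const_right _ _ tendsto_id
    filter_upwards [h2.eventually h1, eventually_ge_atTop 0] with z hz hz0
    refine le_trans ?_ hz.le
    calc b z * Real.exp (-(2*η)) * m η
        = ∫ v in Set.Ioc (-(1/η)) (1/η), b z * Real.exp (-(2*η)) * k v := by
          rw [integral_const_mul]
      _ ≤ ∫ v in Set.Ioc (-(1/η)) (1/η), b (z + η + v / (1/η^2)) * k v := by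
          refine setIntegral_mono_on (hki.integrableOn.const_mul _) (hbk _ _).integrableOn
            measurableSet_Ioc fun v hv => ?_
          obtain ⟨h3, h4⟩ := hrange η hη v hv
          refine mul_le_mul_of_nonneg_right ?_ (hk0 v)
          have h5 := hmono z (z + η + v / (1/η^2)) hz0 (by linarith)
          have h6 : Real.exp (z + η + v / (1/η^2) - z) ≤ Real.exp (2*η) :=
            Real.exp_le_exp.2 (by linarith)
          calc b z * Real.exp (-(2*η))
              ≤ (b (z + η + v / (1/η^2)) * Real.exp (2*η)) * Real.exp (-(2*η)) := by
                gcongr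
                exact h5.trans (mul_le_mul_of_nonneg_left h6 (hb0 _))
            _ = _ := by rw [mul_assoc, ← Real.exp_add]; simp
      _ ≤ ∫ v, b (z + η + v / (1/η^2)) * k v :=
          setIntegral_le_integral (hbk _ _)
            (Eventually.of_forall fun v => mul_nonneg (hb0 _) (hk0 _))
  have hlow : ∀ η > (0:ℝ), ∀ᶠ z in atTop, c - η ≤ b z * Real.exp (2*η) + M * (1 - m η) := by
    intro η hη
    have hl : 0 < 1/η^2 := by positivity
    have h1 := (hlim _ hl).eventually (lt_mem_nhds (show c - η < c by linarith))
    have h2 : Tendsto (fun z : ℝ => z - η) atTop atTop := tendsto_atTop_add_const_right _ _ tendsto_id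
    filter_upwards [h2.eventually h1, eventually_ge_atTop (2*η)] with z hz hz0
    refine hz.le.trans ?_
    set S := Set.Ioc (-(1/η)) (1/η) with hS
    rw [← integral_add_compl (s := S) measurableSet_Ioc (hbk _ _)]
    have hmc : ∫ v in Sᶜ, k v = 1 - m η := by
      have := integral_add_compl (s := S) measurableSet_Ioc hki
      rw [hk1] at this
      simp only [m]; linarith
    have hm1 : m η ≤ 1 := by
      have : 0 ≤ ∫ v in Sᶜ, k v := integral_nonneg fun v => hk0 v
      linarith
    refine add_le_add ?_ ?_
    · calc ∫ v in S, b (z - η + v / (1/η^2)) * k v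
          ≤ ∫ v in S, b z * Real.exp (2*η) * k v := by
            refine setIntegral_mono_on (hbk _ _).integrableOn (hki.integrableOn.const_mul _)
              measurableSet_Ioc fun v hv => ?_
            obtain ⟨h3, h4⟩ := hrange η hη v hv
            refine mul_le_mul_of_nonneg_right ?_ (hk0 v)
            refine (hmono (z - η + v / (1/η^2)) z (by linarith) (by linarith)).trans ?_
            refine mul_le_mul_of_nonneg_left ?_ (hb0 _)
            exact Real.exp_le_exp.2 (by linarith)
        _ = b z * Real.exp (2*η) * m η := by rw [integral_const_mul]
        _ ≤ b z * Real.exp (2*η) := mul_le_of_le_one_right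
            (mul_nonneg (hb0 _) (Real.exp_pos _).le) hm1
    · calc ∫ v in Sᶜ, b (z - η + v / (1/η^2)) * k v ≤ ∫ v in Sᶜ, M * k v := by
            refine setIntegral_mono (hbk _ _).integrableOn (hki.integrableOn.const_mul _) fun v => ?_
            exact mul_le_mul_of_nonneg_right (hbM _) (hk0 v)
        _ = _ := by rw [integral_const_mul, hmc]
  have hid : Tendsto (fun η : ℝ => η) (𝓝[>] 0) (𝓝 0) := nhdsWithin_le_nhds
  have hexp1 : Tendsto (fun η : ℝ => Real.exp (-(2*η))) (𝓝[>] 0) (𝓝 1) := by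
    have : Continuous (fun η : ℝ => Real.exp (-(2*η))) := by fun_prop
    have := this.tendsto 0
    simp only [mul_zero, neg_zero, Real.exp_zero] at this
    exact this.mono_left nhdsWithin_le_nhds
  have hexp2 : Tendsto (fun η : ℝ => Real.exp (2*η)) (𝓝[>] 0) (𝓝 1) := by
    have : Continuous (fun η : ℝ => Real.exp (2*η)) := by fun_prop
    have := this.tendsto 0
    simp only [mul_zero, Real.exp_zero] at this
    exact this.mono_left nhdsWithin_le_nhds
  rw [tendsto_order]
  constructor
  · intro a ha
    have h1 : Tendsto (fun η => (c - η - M * (1 - m η)) / Real.exp (2*η)) (𝓝[>] 0) (𝓝 c) := by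
      have := ((tendsto_const_nhds (x := c)).sub hid |>.sub
        (((tendsto_const_nhds (x := (1:ℝ))).sub hm).const_mul M)).div hexp2 one_ne_zero
      simpa [Pi.div_def] using this
    obtain ⟨η, hη1, hη2⟩ := ((h1.eventually (lt_mem_nhds ha)).and self_mem_nhdsWithin).exists
    filter_upwards [hlow η hη2] with z hz
    refine hη1.trans_le ?_
    rw [div_le_iff₀ (Real.exp_pos _)]
    linarith
  · intro a ha
    have h1 : Tendsto (fun η => (c + η) / (Real.exp (-(2*η)) * m η)) (𝓝[>] 0) (𝓝 c) := by
      have := ((tendsto_const_nhds (x := c)).add hid).div (hexp1.mul hm) (by norm_num)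
      simpa [Pi.div_def] using this
    obtain ⟨η, ⟨hη1, hη3⟩, hη2⟩ := (((h1.eventually (gt_mem_nhds ha)).and
      (hm.eventually (lt_mem_nhds zero_lt_one))).and self_mem_nhdsWithin).exists
    filter_upwards [hup η hη2] with z hz
    refine lt_of_le_of_lt ?_ hη1
    rw [le_div_iff₀ (mul_pos (Real.exp_pos _) hη3), ← mul_assoc]
    exact hz

lemma tauber_fourier (b : ℝ → ℝ) (hbm : Measurable b) (c M : ℝ) (hb0 : ∀ u, 0 ≤ b u)
    (hbM : ∀ u, b u ≤ M) (hmono : ∀ u v, 0 ≤ u → u ≤ v → b u ≤ b v * Real.exp (v - u))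
    (hbc : ∀ u < 0, b u = c) (H : ℂ → ℂ) (hH : ContinuousOn H {z | 0 ≤ z.re})
    (hBH : ∀ δ > (0:ℝ), ∀ t : ℝ, 𝓕 (fun u : ℝ => (((b u - c) * Real.exp (-δ * u) : ℝ) : ℂ)) t
      = H (δ + (2 * Real.pi * t : ℝ) * Complex.I)) : Tendsto b atTop (𝓝 c) := by
  obtain ⟨k, hk0, hki, hk1, hk⟩ := exists_kernel_scaled
  refine tauber_aux b hbm c M hb0 hbM hmono k hk0 hki hk1 fun l hl => ?_
  have h1 := hk (fun u => b u - c) (hbm.sub_const c) (M + |c|) (fun u => by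
    refine (abs_sub _ _).trans ?_
    rw [abs_of_nonneg (hb0 u)]; gcongr; exact hbM u) (fun u hu => by simp [hbc u hu]) H hH hBH l hl
  have hbk : ∀ (y : ℝ), Integrable (fun v => b (y + v / l) * k v) := fun y =>
    hki.bdd_mul (c := M) (hbm.comp (by fun_prop)).aestronglyMeasurable
      (Eventually.of_forall fun v => by
        rw [Real.norm_eq_abs, abs_of_nonneg (hb0 _)]; exact hbM _)
  have h2 : ∀ y, ∫ v, (b (y + v / l) - c) * k v = (∫ v, b (y + v / l) * k v) - c := by
    intro y
    simp_rw [sub_mul]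
    rw [integral_sub (hbk y) (hki.const_mul c), integral_const_mul, hk1, mul_one]
  simp_rw [h2] at h1
  simpa using h1.add_const c

lemma exp_integral (z : ℂ) (hz : 0 < z.re) : ∫ u in Set.Ioi (0:ℝ), Complex.exp (-z * u) = 1 / z := by
  have := integral_exp_mul_complex_Ioi (a := -z) (by simpa using hz) 0
  rw [this]; simp

lemma cov_exp (f : ℝ → ℂ) : ∫ t in Set.Ioi (1:ℝ), f t = ∫ u in Set.Ioi (0:ℝ), Real.exp u • f (Real.exp u) := by
  have himg : Real.exp '' Set.Ioi 0 = Set.Ioi 1 := by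
    ext x; constructor
    · rintro ⟨u, hu, rfl⟩; exact Real.one_lt_exp_iff.2 hu
    · intro hx
      exact ⟨Real.log x, Real.log_pos hx, Real.exp_log (zero_lt_one.trans hx)⟩
  rw [← himg, integral_image_eq_integral_abs_deriv_smul measurableSet_Ioi
    (fun x _ => (Real.hasDerivAt_exp x).hasDerivWithinAt) Real.exp_injective.injOn]
  simp

theorem wiener_ikehara (a : ℕ → ℝ) (ha : ∀ n, 0 ≤ a n) (M c : ℝ) (hc : 0 ≤ c)
    (hM : ∀ n : ℕ, ∑ k ∈ Finset.Icc 1 n, a k ≤ M * n) (G : ℂ → ℂ)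
    (hG : ContinuousOn G {s | 1 ≤ s.re})
    (hGL : ∀ s : ℂ, 1 < s.re → G s = LSeries (fun n => (a n : ℂ)) s - c / (s - 1)) :
    Tendsto (fun n : ℕ => (∑ k ∈ Finset.Icc 1 n, a k) / n) atTop (𝓝 c) := by
  let A : ℝ → ℝ := fun x => ∑ k ∈ Finset.Icc 1 ⌊x⌋₊, a k
  have hA0 : ∀ x, 0 ≤ A x := fun x => Finset.sum_nonneg fun _ _ => ha _
  have hAmono : Monotone A := fun x y hxy =>
    Finset.sum_le_sum_of_subset_of_nonneg (Finset.Icc_subset_Icc_right (Nat.floor_mono hxy))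
      fun _ _ _ => ha _
  have hM0 : 0 ≤ M := by
    have := (Finset.sum_nonneg fun _ _ => ha _).trans (hM 1)
    simpa using this
  have hAM : ∀ x, 0 ≤ x → A x ≤ M * x := fun x hx =>
    (hM _).trans (mul_le_mul_of_nonneg_left (Nat.floor_le hx) hM0)
  let b : ℝ → ℝ := fun u => if u < 0 then c else A (Real.exp u) * Real.exp (-u)
  have hbpos : ∀ u, 0 ≤ u → b u = A (Real.exp u) * Real.exp (-u) := fun u hu => if_neg (not_lt.2 hu)
  have hbm : Measurable b := by
    refine Measurable.ite measurableSet_Iio measurable_const ?_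
    exact (hAmono.measurable.comp Real.measurable_exp).mul (by fun_prop)
  have hb0 : ∀ u, 0 ≤ b u := by
    intro u; simp only [b]; split_ifs
    · exact hc
    · exact mul_nonneg (hA0 _) (Real.exp_pos _).le
  have hexpM : ∀ u, A (Real.exp u) * Real.exp (-u) ≤ M := by
    intro u
    calc A (Real.exp u) * Real.exp (-u) ≤ (M * Real.exp u) * Real.exp (-u) := by
          gcongr; exact hAM _ (Real.exp_pos _).le
      _ = M := by rw [mul_assoc, ← Real.exp_add]; simp
  have hbM : ∀ u, b u ≤ max M c := by
    intro u; simp only [b]; split_ifs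
    · exact le_max_right _ _
    · exact (hexpM u).trans (le_max_left _ _)
  have hmono : ∀ u v, 0 ≤ u → u ≤ v → b u ≤ b v * Real.exp (v - u) := by
    intro u v hu huv
    rw [hbpos u hu, hbpos v (hu.trans huv), mul_assoc, ← Real.exp_add]
    rw [show -v + (v - u) = -u by ring]
    gcongr
    exact hAmono (Real.exp_le_exp.2 huv)
  have hbc : ∀ u < 0, b u = c := fun u hu => if_pos hu
  let H : ℂ → ℂ := fun z => (G (1 + z) - c) / (1 + z)
  have hH : ContinuousOn H {z | 0 ≤ z.re} := by
    refine ContinuousOn.div ?_ (by fun_prop) ?_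
    · refine ContinuousOn.sub (hG.comp (by fun_prop) ?_) continuousOn_const
      intro z hz; simpa using hz
    · intro z hz h0
      have := congrArg Complex.re h0
      simp at this hz; linarith
  have hBH : ∀ δ > (0:ℝ), ∀ t : ℝ, 𝓕 (fun u : ℝ => (((b u - c) * Real.exp (-δ * u) : ℝ) : ℂ)) t
      = H (δ + (2 * Real.pi * t : ℝ) * Complex.I) := by
    intro δ hδ t
    set z : ℂ := δ + (2 * Real.pi * t : ℝ) * Complex.I with hz
    have hzre : z.re = δ := by simp [hz]
    have hzpos : 0 < z.re := by rw [hzre]; exact hδ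
    have hz0 : z ≠ 0 := fun h => by rw [h] at hzpos; simp at hzpos
    have hz1 : (1 + z) ≠ 0 := fun h => by
      have := congrArg Complex.re h
      simp at this; linarith
    have hsre : 1 < (1 + z).re := by simp; exact hzpos
    rw [Real.fourier_real_eq_integral_exp_smul]
    have hsplit : (fun v : ℝ => Complex.exp ((-2 * Real.pi * v * t : ℝ) * Complex.I) •
        (((b v - c) * Real.exp (-δ * v) : ℝ) : ℂ)) =
        (Set.Ici 0).indicator (fun v : ℝ => ((b v : ℂ) - c) * Complex.exp (-z * v)) := by
      ext v
      by_cases hv : 0 ≤ v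
      · rw [Set.indicator_of_mem (by exact hv)]
        have : -z * v = ((-2 * Real.pi * v * t : ℝ) * Complex.I) + ((-δ * v : ℝ) : ℂ) := by
          rw [hz]; push_cast; ring
        rw [this, Complex.exp_add, smul_eq_mul]
        push_cast; ring
      · rw [Set.indicator_of_notMem (by exact hv)]
        simp [hbc v (not_le.1 hv)]
    rw [hsplit, integral_indicator measurableSet_Ici, integral_Ici_eq_integral_Ioi]
    have hei : IntegrableOn (fun v : ℝ => Complex.exp (-z * v)) (Set.Ioi 0) :=
      integrableOn_exp_mul_complex_Ioi (by simpa using hzpos) 0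
    have hbi : IntegrableOn (fun v : ℝ => (b v : ℂ) * Complex.exp (-z * v)) (Set.Ioi 0) :=
      hei.bdd_mul (c := max M c) (Complex.measurable_ofReal.comp hbm).aestronglyMeasurable
        (Eventually.of_forall fun v => by
          simp only [Complex.norm_real, Real.norm_eq_abs]
          rw [abs_of_nonneg (hb0 v)]; exact hbM v)
    simp_rw [sub_mul]
    rw [integral_sub hbi (hei.const_mul _), integral_const_mul, exp_integral z hzpos]
    have hO : (fun n : ℕ => ∑ k ∈ Finset.Icc 1 n, a k) =O[atTop] fun n : ℕ => (n : ℝ) ^ (1:ℝ) := by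
      refine Asymptotics.IsBigO.of_bound M (Eventually.of_forall fun n => ?_)
      rw [Real.norm_eq_abs, abs_of_nonneg (Finset.sum_nonneg fun _ _ => ha _), Real.rpow_one]
      simpa using hM n
    have hL := LSeries_eq_mul_integral_of_nonneg a zero_le_one hsre hO ha
    rw [cov_exp] at hL
    have hcongr : ∫ u in Set.Ioi (0:ℝ), Real.exp u • ((∑ k ∈ Finset.Icc 1 ⌊Real.exp u⌋₊, (a k : ℂ)) *
        ((Real.exp u : ℝ) : ℂ) ^ (-(1 + z + 1))) =
        ∫ v in Set.Ioi (0:ℝ), (b v : ℂ) * Complex.exp (-z * v) := by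
      refine setIntegral_congr_fun measurableSet_Ioi fun u hu => ?_
      rw [hbpos u (le_of_lt hu), Complex.cpow_def_of_ne_zero (by exact_mod_cast (Real.exp_pos u).ne'),
        ← Complex.ofReal_log (Real.exp_pos u).le, Real.log_exp, Complex.real_smul]
      have h1 : (∑ k ∈ Finset.Icc 1 ⌊Real.exp u⌋₊, (a k : ℂ)) = (A (Real.exp u) : ℂ) := by
        simp [A]
      rw [h1]
      push_cast
      rw [mul_left_comm, mul_assoc, ← Complex.exp_add, ← Complex.exp_add]
      congr 2; ring
    rw [hcongr] at hL
    simp only [H]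
    rw [hGL _ hsre, hL]
    rw [add_sub_cancel_left]
    field_simp
    ring
  have hT := tauber_fourier b hbm c (max M c) hb0 hbM hmono hbc H hH hBH
  have hlog : Tendsto (fun n : ℕ => Real.log n) atTop atTop :=
    Real.tendsto_log_atTop.comp tendsto_natCast_atTop_atTop
  refine (hT.comp hlog).congr' ?_
  filter_upwards [eventually_ge_atTop 1] with n hn
  have hn' : (0:ℝ) < n := by exact_mod_cast hn
  simp only [Function.comp]
  rw [hbpos _ (Real.log_natCast_nonneg n), Real.exp_neg, Real.exp_log hn']
  simp [A, div_eq_mul_inv]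

end partD

section partE
open ArithmeticFunction Topology

lemma thAP_sub (q n : ℕ) :
    (∑ k ∈ Finset.Icc 1 n, vonMangoldt.residueClass (1 : ZMod q) k) - thAP q n =
      ∑ k ∈ (Finset.Icc 1 n).filter (fun k => ¬ k.Prime),
        vonMangoldt.residueClass (1 : ZMod q) k := by
  rw [← Finset.sum_filter_add_sum_filter_not (Finset.Icc 1 n) Nat.Prime]
  have : thAP q n = ∑ k ∈ (Finset.Icc 1 n).filter Nat.Prime,
      vonMangoldt.residueClass (1 : ZMod q) k := by
    unfold thAP
    have hs : (Finset.range (n+1)).filter (fun p => p.Prime ∧ q ∣ p - 1) =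
        ((Finset.Icc 1 n).filter Nat.Prime).filter (fun p => q ∣ p - 1) := by
      ext p
      simp only [Finset.mem_filter, Finset.mem_range, Finset.mem_Icc]
      constructor
      · rintro ⟨h1, h2, h3⟩
        exact ⟨⟨⟨h2.one_le, by omega⟩, h2⟩, h3⟩
      · rintro ⟨⟨⟨h1, h2⟩, h3⟩, h4⟩
        exact ⟨by omega, h3, h4⟩
    rw [hs, Finset.sum_filter]
    refine Finset.sum_congr rfl fun p hp => ?_
    have hp' := (Finset.mem_filter.1 hp).2
    have hiff : ((p : ZMod q) = 1) ↔ q ∣ p - 1 := by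
      rw [← Nat.modEq_iff_dvd' hp'.one_le, ← ZMod.natCast_eq_natCast_iff]
      simp [eq_comm]
    unfold vonMangoldt.residueClass
    rw [Set.indicator_apply]
    simp only [Set.mem_ofPred_eq, hiff, vonMangoldt_apply_prime hp']
  rw [this]; ring

lemma thAP_tendsto (q : ℕ) (hq : q ≠ 0) :
    Tendsto (fun n : ℕ => thAP q n / n) atTop (𝓝 ((q.totient : ℝ)⁻¹)) := by
  have : NeZero q := ⟨hq⟩
  have h1 : Tendsto (fun n : ℕ => (∑ k ∈ Finset.Icc 1 n,
      vonMangoldt.residueClass (1 : ZMod q) k) / n) atTop (𝓝 ((q.totient : ℝ)⁻¹)) := by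
    refine wiener_ikehara _ (vonMangoldt.residueClass_nonneg 1) (Real.log 4 + 4) _
      (by positivity) ?_ (vonMangoldt.LFunctionResidueClassAux (1 : ZMod q))
      (vonMangoldt.continuousOn_LFunctionResidueClassAux 1) ?_
    · intro n
      refine le_trans ?_ (Chebyshev.psi_le_const_mul_self (Nat.cast_nonneg n))
      unfold Chebyshev.psi
      rw [Nat.floor_natCast]
      exact Finset.sum_le_sum fun k _ => vonMangoldt.residueClass_le 1 k
    · intro s hs
      have := vonMangoldt.eqOn_LFunctionResidueClassAux (q := q) (a := 1) isUnit_one hs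
      rw [this]
      push_cast
      rfl
  obtain ⟨C, hC⟩ := Chebyshev.psi_sub_theta_le_mul_sqrt
  have h2 : Tendsto (fun n : ℕ => ((∑ k ∈ Finset.Icc 1 n,
      vonMangoldt.residueClass (1 : ZMod q) k) - thAP q n) / n) atTop (𝓝 0) := by
    have h3 : Tendsto (fun n : ℕ => C * (√(n:ℝ))⁻¹) atTop (𝓝 0) := by
      have : Tendsto (fun n : ℕ => (√(n:ℝ))⁻¹) atTop (𝓝 0) :=
        tendsto_inv_atTop_zero.comp (Real.tendsto_sqrt_atTop.comp tendsto_natCast_atTop_atTop)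
      simpa using this.const_mul C
    refine tendsto_of_tendsto_of_tendsto_of_le_of_le tendsto_const_nhds h3 ?_ ?_
    · intro n
      simp only
      rw [thAP_sub]
      exact div_nonneg (Finset.sum_nonneg fun k _ => vonMangoldt.residueClass_nonneg 1 k)
        (Nat.cast_nonneg n)
    · intro n
      simp only
      rw [thAP_sub]
      have h4 := hC n
      rw [Chebyshev.psi_sub_theta_eq_sum_not_prime, Nat.floor_natCast] at h4
      have h5 : ∑ k ∈ (Finset.Icc 1 n).filter (fun k => ¬ k.Prime),
        vonMangoldt.residueClass (1 : ZMod q) k ≤ C * √(n:ℝ) :=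
        le_trans (Finset.sum_le_sum fun k _ => vonMangoldt.residueClass_le 1 k) h4
      refine (div_le_div_of_nonneg_right h5 (Nat.cast_nonneg n)).trans (le_of_eq ?_)
      rw [mul_div_assoc, Real.sqrt_div_self]
  have := h1.sub h2
  simp only [sub_zero] at this
  refine this.congr fun n => ?_
  ring

/-- weighted prime sums -/
noncomputable def wsum (f : ℕ → ℝ) (n : ℕ) : ℝ :=
  ∑ p ∈ (Finset.range (n+1)).filter Nat.Prime, f (p - 1) * Real.log p

noncomputable def Fs (S : Finset ℕ) (n : ℕ) : ℝ :=
  ∏ l ∈ S, (1 + (if l ∣ n then - (1 / (l:ℝ)) else 0))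

lemma wsum_Fs (S : Finset ℕ) (hS : ∀ l ∈ S, l.Prime) (n : ℕ) :
    wsum (Fs S) n = ∑ t ∈ S.powerset, (∏ l ∈ t, (-(1 / (l:ℝ)))) * thAP (∏ l ∈ t, l) n := by
  unfold wsum Fs
  simp_rw [Finset.prod_one_add, Finset.sum_mul]
  rw [Finset.sum_comm]
  refine Finset.sum_congr rfl fun t ht => ?_
  have htS := Finset.mem_powerset.1 ht
  unfold thAP
  rw [← Finset.filter_filter, Finset.sum_filter (p := fun p => (∏ l ∈ t, l) ∣ p - 1), Finset.mul_sum]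
  refine Finset.sum_congr rfl fun p _ => ?_
  have hdvd : (∏ l ∈ t, l) ∣ p - 1 ↔ ∀ l ∈ t, l ∣ p - 1 := by
    constructor
    · intro h l hl
      exact (Finset.dvd_prod_of_mem _ hl).trans h
    · intro h
      exact Finset.prod_primes_dvd _ (fun l hl => (hS l (htS hl)).prime) h
  rw [Finset.prod_ite_zero]
  simp only [hdvd]
  split_ifs <;> simp

lemma totient_prod_primes (t : Finset ℕ) (ht : ∀ l ∈ t, l.Prime) :
    (((∏ l ∈ t, l).totient : ℕ) : ℝ) = ∏ l ∈ t, ((l : ℝ) - 1) := by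
  induction t using Finset.induction_on with
  | empty => simp
  | insert a s ha ih =>
    rw [Finset.prod_insert ha, Finset.prod_insert ha, Nat.totient_mul, Nat.cast_mul,
      ih fun l hl => ht l (Finset.mem_insert_of_mem hl),
      Nat.totient_prime (ht a (Finset.mem_insert_self _ _)),
      Nat.cast_sub (ht a (Finset.mem_insert_self _ _)).one_le, Nat.cast_one]
    refine Nat.Coprime.prod_right fun i hi => ?_
    rw [Nat.coprime_primes (ht a (Finset.mem_insert_self _ _)) (ht i (Finset.mem_insert_of_mem hi))]
    rintro rfl
    exact ha hi

lemma wsum_Fs_tendsto (S : Finset ℕ) (hS : ∀ l ∈ S, l.Prime) :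
    Tendsto (fun n : ℕ => wsum (Fs S) n / n) atTop
      (𝓝 (∏ l ∈ S, (1 + -(1 / ((l:ℝ) * ((l:ℝ) - 1)))))) := by
  simp_rw [wsum_Fs S hS, Finset.prod_one_add, Finset.sum_div]
  refine tendsto_finsetSum _ fun t ht => ?_
  have htS := Finset.mem_powerset.1 ht
  have htP : ∀ l ∈ t, l.Prime := fun l hl => hS l (htS hl)
  have h := (thAP_tendsto (∏ l ∈ t, l) (Finset.prod_ne_zero_iff.2
    fun l hl => (htP l hl).ne_zero)).const_mul (∏ l ∈ t, (-(1 / (l:ℝ))))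
  rw [totient_prod_primes t htP, ← Finset.prod_inv_distrib, ← Finset.prod_mul_distrib] at h
  have e : ∏ l ∈ t, (-(1 / (l:ℝ)) * ((l:ℝ) - 1)⁻¹) =
      ∏ l ∈ t, -(1 / ((l:ℝ) * ((l:ℝ) - 1))) := by
    refine Finset.prod_congr rfl fun l hl => ?_
    rw [one_div, one_div, mul_inv]; ring
  rw [e] at h
  refine h.congr fun n => ?_
  rw [mul_div_assoc]

noncomputable def Ft (n : ℕ) : ℝ := (n.totient : ℝ) / n

lemma Ft_eq (n : ℕ) (hn : n ≠ 0) : Ft n = ∏ l ∈ n.primeFactors, (1 - 1 / (l:ℝ)) := by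
  have h := Nat.totient_eq_mul_prod_factors n
  have h2 : ((n.totient : ℚ) : ℝ) = ((n * ∏ p ∈ n.primeFactors, (1 - (p:ℚ)⁻¹) : ℚ) : ℝ) := by
    rw [h]
  push_cast at h2
  have : (n:ℝ) ≠ 0 := Nat.cast_ne_zero.2 hn
  unfold Ft
  rw [h2]
  field_simp

lemma Ft_nonneg (n : ℕ) : 0 ≤ Ft n := by unfold Ft; positivity

lemma Ft_le_one (n : ℕ) : Ft n ≤ 1 :=
  div_le_one_of_le₀ (by exact_mod_cast Nat.totient_le n) (Nat.cast_nonneg n)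

lemma prod_one_sub_bounds (s : Finset ℕ) (x : ℕ → ℝ) (h0 : ∀ i ∈ s, 0 ≤ x i)
    (h1 : ∀ i ∈ s, x i ≤ 1) :
    0 ≤ ∏ i ∈ s, (1 - x i) ∧ ∏ i ∈ s, (1 - x i) ≤ 1 ∧
      1 - ∏ i ∈ s, (1 - x i) ≤ ∑ i ∈ s, x i := by
  induction s using Finset.induction_on with
  | empty => simp
  | insert a s ha ih =>
    obtain ⟨i0, i1, i2⟩ := ih (fun i hi => h0 i (Finset.mem_insert_of_mem hi))
      (fun i hi => h1 i (Finset.mem_insert_of_mem hi))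
    have a0 := h0 a (Finset.mem_insert_self _ _)
    have a1 := h1 a (Finset.mem_insert_self _ _)
    rw [Finset.prod_insert ha, Finset.sum_insert ha]
    refine ⟨mul_nonneg (by linarith) i0, ?_, ?_⟩
    · nlinarith
    · nlinarith

lemma inv_prime_bounds (l : ℕ) (hl : l.Prime) : 0 ≤ 1 / (l:ℝ) ∧ 1 / (l:ℝ) ≤ 1 := by
  refine ⟨by positivity, ?_⟩
  rw [div_le_one (by exact_mod_cast hl.pos)]
  exact_mod_cast hl.one_le

lemma Ft_sub_Fs (S : Finset ℕ) (hS : ∀ l ∈ S, l.Prime) (n : ℕ) (hn : n ≠ 0) :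
    |Ft n - Fs S n| ≤ ∑ l ∈ n.primeFactors \ S, 1 / (l:ℝ) := by
  have e1 : Fs S n = ∏ l ∈ n.primeFactors ∩ S, (1 - 1 / (l:ℝ)) := by
    unfold Fs
    have : n.primeFactors ∩ S = S.filter (fun l => l ∣ n) := by
      ext l
      simp only [Finset.mem_inter, Finset.mem_filter, Nat.mem_primeFactors]
      constructor
      · rintro ⟨⟨h1, h2, h3⟩, h4⟩; exact ⟨h4, h2⟩
      · rintro ⟨h1, h2⟩; exact ⟨⟨hS l h1, h2, hn⟩, h1⟩
    rw [this, Finset.prod_filter]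
    refine Finset.prod_congr rfl fun l _ => ?_
    split_ifs <;> ring
  have e2 : Ft n = (∏ l ∈ n.primeFactors ∩ S, (1 - 1 / (l:ℝ))) *
      ∏ l ∈ n.primeFactors \ S, (1 - 1 / (l:ℝ)) := by
    rw [Ft_eq n hn, Finset.prod_inter_mul_prod_sdiff]
  obtain ⟨a0, a1, -⟩ := prod_one_sub_bounds (n.primeFactors ∩ S) (fun l => 1 / (l:ℝ))
    (fun l hl => (inv_prime_bounds l (Nat.prime_of_mem_primeFactors (Finset.mem_inter.1 hl).1)).1)
    (fun l hl => (inv_prime_bounds l (Nat.prime_of_mem_primeFactors (Finset.mem_inter.1 hl).1)).2)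
  obtain ⟨b0, b1, b2⟩ := prod_one_sub_bounds (n.primeFactors \ S) (fun l => 1 / (l:ℝ))
    (fun l hl => (inv_prime_bounds l (Nat.prime_of_mem_primeFactors (Finset.mem_sdiff.1 hl).1)).1)
    (fun l hl => (inv_prime_bounds l (Nat.prime_of_mem_primeFactors (Finset.mem_sdiff.1 hl).1)).2)
  rw [e2, e1, abs_le]
  constructor <;> nlinarith

noncomputable def gl (l : ℕ) : ℝ := Real.log l / (l:ℝ)^2

lemma gl_nonneg (l : ℕ) : 0 ≤ gl l := by
  unfold gl
  have := Real.log_natCast_nonneg l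
  positivity

lemma gl_summable : Summable gl := by
  have h : Summable (fun n : ℕ => 2 * (1 / (n:ℝ) ^ ((3:ℝ)/2))) :=
    (Real.summable_one_div_nat_rpow.2 (by norm_num)).mul_left 2
  refine Summable.of_nonneg_of_le gl_nonneg (fun n => ?_) h
  rcases Nat.eq_zero_or_pos n with rfl | hn
  · simp [gl]
  · have hn' : (0:ℝ) < n := by exact_mod_cast hn
    have h1 := Real.log_le_rpow_div hn'.le (show (0:ℝ) < 1/2 by norm_num)
    unfold gl
    rw [div_le_iff₀ (by positivity)]
    have e : (n:ℝ)^2 = (n:ℝ)^((1:ℝ)/2) * (n:ℝ)^((3:ℝ)/2) := by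
      rw [← Real.rpow_add hn', ← Real.rpow_natCast]; norm_num
    rw [e]
    have hp : (0:ℝ) < (n:ℝ)^((3:ℝ)/2) := by positivity
    refine h1.trans (le_of_eq ?_)
    field_simp

def Sy (y : ℕ) : Finset ℕ := (Finset.range y).filter Nat.Prime

lemma Sy_prime (y l : ℕ) (h : l ∈ Sy y) : l.Prime := (Finset.mem_filter.1 h).2

lemma wsum_sub (y n : ℕ) :
    |wsum Ft n - wsum (Fs (Sy y)) n| ≤ 6 * n * (∑' l, gl l - ∑ l ∈ Finset.range y, gl l) := by
  set T : Finset ℕ := ((Finset.range (n+1)).filter Nat.Prime) \ Sy y with hT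
  have h1 : |wsum Ft n - wsum (Fs (Sy y)) n| ≤
      ∑ p ∈ (Finset.range (n+1)).filter Nat.Prime,
        ∑ l ∈ T, (if l ∣ p - 1 then 1 / (l:ℝ) * Real.log p else 0) := by
    unfold wsum
    rw [← Finset.sum_sub_distrib]
    refine (Finset.abs_sum_le_sum_abs _ _).trans (Finset.sum_le_sum fun p hp => ?_)
    have hpp := (Finset.mem_filter.1 hp).2
    have hpn := Finset.mem_range.1 (Finset.mem_filter.1 hp).1
    have hlog : 0 ≤ Real.log p := Real.log_natCast_nonneg p
    rw [← sub_mul, abs_mul, abs_of_nonneg hlog, ← Finset.sum_filter, ← Finset.sum_mul]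
    refine mul_le_mul_of_nonneg_right ?_ hlog
    have hp2 := hpp.two_le
    refine (Ft_sub_Fs (Sy y) (Sy_prime y) (p-1) (by omega)).trans ?_
    refine Finset.sum_le_sum_of_subset_of_nonneg ?_ (fun l _ _ => by positivity)
    intro l hl
    obtain ⟨hl1, hl2⟩ := Finset.mem_sdiff.1 hl
    obtain ⟨hl3, hl4, hl5⟩ := Nat.mem_primeFactors.1 hl1
    have := Nat.le_of_dvd (by omega) hl4
    exact Finset.mem_filter.2 ⟨Finset.mem_sdiff.2 ⟨Finset.mem_filter.2
      ⟨Finset.mem_range.2 (by omega), hl3⟩, hl2⟩, hl4⟩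
  have h2 : ∑ p ∈ (Finset.range (n+1)).filter Nat.Prime,
        ∑ l ∈ T, (if l ∣ p - 1 then 1 / (l:ℝ) * Real.log p else 0) =
      ∑ l ∈ T, 1 / (l:ℝ) * thAP l n := by
    rw [Finset.sum_comm]
    refine Finset.sum_congr rfl fun l _ => ?_
    unfold thAP
    rw [← Finset.filter_filter, ← Finset.sum_filter, Finset.mul_sum]
  have h3 : ∑ l ∈ T, 1 / (l:ℝ) * thAP l n ≤ ∑ l ∈ T, 6 * n * gl l := by
    refine Finset.sum_le_sum fun l hl => ?_
    have hlp : l.Prime := (Finset.mem_filter.1 (Finset.mem_sdiff.1 hl).1).2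
    refine (mul_le_mul_of_nonneg_left (thAP_le l n hlp) (by positivity)).trans (le_of_eq ?_)
    unfold gl
    have : (l:ℝ) ≠ 0 := by exact_mod_cast hlp.ne_zero
    field_simp
  rw [h2] at h1
  refine h1.trans (h3.trans ?_)
  rw [← Finset.mul_sum]
  refine mul_le_mul_of_nonneg_left ?_ (by positivity)
  have hd : Disjoint T (Finset.range y) := by
    rw [Finset.disjoint_left]
    intro l hl hl2
    obtain ⟨h5, h6⟩ := Finset.mem_sdiff.1 hl
    exact h6 (Finset.mem_filter.2 ⟨hl2, (Finset.mem_filter.1 h5).2⟩)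
  have := gl_summable.sum_le_tsum (T ∪ Finset.range y) (fun i _ => gl_nonneg i)
  rw [Finset.sum_union hd] at this
  linarith

lemma artin_prod_tendsto :
    Tendsto (fun y => ∏ l ∈ Sy y, (1 + -(1 / ((l:ℝ) * ((l:ℝ) - 1))))) atTop
      (𝓝 artinConstant) := by
  set f : ℕ → ℝ := fun l => if l.Prime then -(1 / ((l:ℝ) * ((l:ℝ) - 1))) else 0 with hf
  have hsum : Summable f := by
    have h : Summable (fun n : ℕ => 2 * (1 / (n:ℝ) ^ 2)) :=
      (Real.summable_one_div_nat_pow.2 (by norm_num)).mul_left 2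
    refine Summable.of_norm_bounded h fun l => ?_
    simp only [hf]
    split_ifs with hl
    · have h2 : (2:ℝ) ≤ l := by exact_mod_cast hl.two_le
      have h3 : 0 < (l:ℝ) * ((l:ℝ) - 1) := by nlinarith
      rw [norm_neg, Real.norm_of_nonneg (by positivity), mul_one_div,
        div_le_div_iff₀ h3 (by positivity)]
      nlinarith
    · simp
  have hm := (Real.multipliable_one_add_of_summable hsum).tendsto_prod_tprod_nat
  have e : artinConstant = ∏' i, (1 + f i) := by
    unfold artinConstant
    have := tprod_subtype {p : ℕ | p.Prime} (fun l : ℕ => 1 - 1 / ((l:ℝ) * ((l:ℝ) - 1)))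
    refine this.trans (tprod_congr fun l => ?_)
    rw [Set.mulIndicator_apply]
    simp only [hf, Set.mem_ofPred_eq]
    split_ifs <;> ring
  rw [e]
  refine hm.congr fun y => ?_
  unfold Sy
  rw [Finset.prod_filter]
  refine Finset.prod_congr rfl fun l _ => ?_
  simp only [hf]
  split_ifs <;> simp

lemma wsum_Ft_tendsto : Tendsto (fun n : ℕ => wsum Ft n / n) atTop (𝓝 artinConstant) := by
  rw [Metric.tendsto_atTop]
  intro ε hε
  have htail : Tendsto (fun y => 6 * (∑' l, gl l - ∑ l ∈ Finset.range y, gl l)) atTop (𝓝 0) := by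
    have := (gl_summable.hasSum.tendsto_sum_nat.const_sub (∑' l, gl l)).const_mul 6
    simpa using this
  obtain ⟨y, hy1, hy2⟩ := ((htail.eventually (gt_mem_nhds (show 0 < ε/3 by linarith))).and
    (Metric.tendsto_nhds.1 artin_prod_tendsto (ε/3) (by linarith))).exists
  obtain ⟨N, hN⟩ := (Metric.tendsto_atTop.1 (wsum_Fs_tendsto (Sy y) (Sy_prime y)) (ε/3)
    (by linarith))
  refine ⟨N + 1, fun n hn => ?_⟩
  have h1 := hN n (by omega)
  have h2 := wsum_sub y n
  have hn0 : (0:ℝ) < n := by exact_mod_cast (by omega : 0 < n)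
  have h3 : |wsum Ft n / n - wsum (Fs (Sy y)) n / n| < ε/3 := by
    rw [← sub_div, abs_div, abs_of_pos hn0, div_lt_iff₀ hn0]
    nlinarith
  rw [Real.dist_eq] at *
  rw [abs_lt] at *
  constructor <;> linarith [h1.1, h1.2, h3.1, h3.2, hy2.1, hy2.2]

noncomputable def psum (f : ℕ → ℝ) (n : ℕ) : ℝ :=
  ∑ p ∈ (Finset.range (n+1)).filter Nat.Prime, f (p - 1)

lemma sum_filter_prime_eq (f : ℕ → ℝ) (m : ℕ) :
    ∑ p ∈ (Finset.range m).filter Nat.Prime, f p =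
      ∑ i ∈ Finset.range (Nat.count Nat.Prime m), f (Nat.nth Nat.Prime i) := by
  induction m with
  | zero => simp
  | succ m ih =>
    rw [Finset.range_add_one, Finset.filter_insert, Nat.count_succ]
    split_ifs with h
    · rw [Finset.sum_insert (by simp), ih, Finset.sum_range_succ, Nat.nth_count h]
      ring
    · rw [ih, add_zero]

lemma psum_one (n : ℕ) : psum (fun _ => 1) n = (n.primeCounting : ℝ) := by
  unfold psum
  rw [Finset.sum_const, Nat.primeCounting, Nat.primeCounting', Nat.count_eq_card_filter_range]
  simp

lemma thAP_one (n : ℕ) : thAP 1 n = wsum (fun _ => 1) n := by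
  unfold thAP wsum
  simp

lemma theta_eq (n : ℕ) : Chebyshev.theta n = thAP 1 n := by
  unfold Chebyshev.theta thAP
  rw [Nat.floor_natCast]
  refine Finset.sum_congr ?_ fun _ _ => rfl
  ext p
  simp only [Finset.mem_filter, Finset.mem_Ioc, Finset.mem_range, one_dvd, and_true]
  constructor
  · rintro ⟨⟨h1, h2⟩, h3⟩; exact ⟨by omega, h3⟩
  · rintro ⟨h1, h2⟩; exact ⟨⟨h2.pos, by omega⟩, h2⟩

lemma pi_err : Tendsto (fun n : ℕ => (psum (fun _ => 1) n * Real.log n -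
    wsum (fun _ => 1) n) / n) atTop (𝓝 0) := by
  obtain ⟨C, hC⟩ := Chebyshev.primeCounting_sub_theta_div_log_isBigO.bound
  have hC' := tendsto_natCast_atTop_atTop (R := ℝ) |>.eventually hC
  have hlog : Tendsto (fun n : ℕ => C * (Real.log n)⁻¹) atTop (𝓝 0) := by
    have : Tendsto (fun n : ℕ => (Real.log (n:ℝ))⁻¹) atTop (𝓝 0) :=
      tendsto_inv_atTop_zero.comp (Real.tendsto_log_atTop.comp tendsto_natCast_atTop_atTop)
    simpa using this.const_mul C
  refine squeeze_zero_norm' ?_ hlog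
  filter_upwards [hC', eventually_ge_atTop 2] with n hn hn2
  have hn0 : (0:ℝ) < n := by exact_mod_cast (by omega : 0 < n)
  have hl : 0 < Real.log n := Real.log_pos (by exact_mod_cast (by omega : 1 < n))
  rw [Nat.floor_natCast, theta_eq, thAP_one, ← psum_one,
    Real.norm_of_nonneg (by positivity : 0 ≤ (n:ℝ) / Real.log n ^ 2)] at hn
  have e : (psum (fun _ => 1) n * Real.log n - wsum (fun _ => 1) n) / n =
      (psum (fun _ => 1) n - wsum (fun _ => 1) n / Real.log n) * (Real.log n / n) := by
    field_simp
  rw [e, norm_mul, Real.norm_of_nonneg (by positivity : 0 ≤ Real.log n / (n:ℝ))]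
  refine (mul_le_mul_of_nonneg_right hn (by positivity)).trans (le_of_eq ?_)
  field_simp

lemma psum_err : Tendsto (fun n : ℕ => (psum Ft n * Real.log n - wsum Ft n) / n)
    atTop (𝓝 0) := by
  have key : ∀ (f : ℕ → ℝ) (n : ℕ), psum f n * Real.log n - wsum f n =
      ∑ p ∈ (Finset.range (n+1)).filter Nat.Prime, f (p - 1) * (Real.log n - Real.log p) := by
    intro f n
    unfold psum wsum
    rw [Finset.sum_mul, ← Finset.sum_sub_distrib]
    exact Finset.sum_congr rfl fun p _ => by ring
  have hd : ∀ n : ℕ, ∀ p ∈ (Finset.range (n+1)).filter Nat.Prime,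
      0 ≤ Real.log n - Real.log p := by
    intro n p hp
    obtain ⟨h1, h2⟩ := Finset.mem_filter.1 hp
    have h3 := Finset.mem_range.1 h1
    rw [sub_nonneg]
    exact Real.log_le_log (by exact_mod_cast h2.pos) (by exact_mod_cast (by omega : p ≤ n))
  refine squeeze_zero (fun n => ?_) (fun n => ?_) pi_err
  · rw [key]
    exact div_nonneg (Finset.sum_nonneg fun p hp => mul_nonneg (Ft_nonneg _) (hd n p hp))
      (Nat.cast_nonneg n)
  · refine div_le_div_of_nonneg_right ?_ (Nat.cast_nonneg n)
    rw [key, key]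
    exact Finset.sum_le_sum fun p hp =>
      mul_le_mul_of_nonneg_right (Ft_le_one _) (hd n p hp)

lemma psum_ratio : Tendsto (fun n : ℕ => psum Ft n / psum (fun _ => 1) n) atTop
    (𝓝 artinConstant) := by
  have h1 := psum_err.add wsum_Ft_tendsto
  have h2 := pi_err.add ((thAP_tendsto 1 one_ne_zero).congr fun n => by rw [thAP_one])
  have h3 := h1.div h2 (by simp)
  simp only [Nat.totient_one, Nat.cast_one, inv_one, zero_add, div_one] at h3
  refine h3.congr' ?_
  filter_upwards [eventually_ge_atTop 2] with n hn2
  have hn0 : (0:ℝ) < n := by exact_mod_cast (by omega : 0 < n)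
  have hl : 0 < Real.log n := Real.log_pos (by exact_mod_cast (by omega : 1 < n))
  simp only [Pi.div_apply]
  rw [← add_div, ← add_div, sub_add_cancel, sub_add_cancel, div_div_div_cancel_right₀ hn0.ne',
    mul_div_mul_right _ _ hl.ne']

end partE

/-- The average `(1/N) ∑_{i=1}^N φ(p_i - 1)/(p_i - 1)` over the first `N` primes
tends to Artin's constant. -/
theorem artin_summation_formula :
    Tendsto (fun N : ℕ =>
        (1 / (N : ℝ)) * ∑ i ∈ Finset.range N,
          ((Nat.nth Nat.Prime i - 1).totient : ℝ) / ((Nat.nth Nat.Prime i : ℝ) - 1))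
      atTop (nhds artinConstant) := by
  have hm : Tendsto (fun N : ℕ => Nat.nth Nat.Prime N - 1) atTop atTop := by
    refine tendsto_atTop_mono (fun N => ?_) tendsto_id
    have := Nat.add_two_le_nth_prime N
    simp only [id]
    omega
  refine (psum_ratio.comp hm).congr fun N => ?_
  have h1 : Nat.nth Nat.Prime N - 1 + 1 = Nat.nth Nat.Prime N := by
    have := Nat.add_two_le_nth_prime N
    omega
  have h2 : Nat.count Nat.Prime (Nat.nth Nat.Prime N) = N := Nat.primeCounting'_nth_eq N
  have h3 : ∀ f : ℕ → ℝ, psum f (Nat.nth Nat.Prime N - 1) =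
      ∑ i ∈ Finset.range N, f (Nat.nth Nat.Prime i - 1) := by
    intro f
    unfold psum
    rw [h1, sum_filter_prime_eq (fun p => f (p - 1)), h2]
  simp only [Function.comp]
  rw [h3, h3]
  simp only [Finset.sum_const, Finset.card_range, nsmul_eq_mul, mul_one]
  rw [div_eq_mul_one_div, mul_comm]
  congr 1
  refine Finset.sum_congr rfl fun i _ => ?_
  unfold Ft
  have := Nat.add_two_le_nth_prime i
  rw [Nat.cast_sub (by omega), Nat.cast_one]
end

section
/- Let g be an integer with |g| > 1 which is not a perfect square, write g = g₀^h with g₀ ∈ ℤ and h ∈ ℕ maximal, and let d be the discriminant of ℚ(√g) (i.e. d = g₁ if the squarefree kernel g₁ of g satisfies g₁ ≡ 1 (mod 4), and d = 4g₁ otherwise). For an odd prime p not dividing g define φ_g(p) = 2·φ(p−1)/(p−1) if the Legendre symbol (g/p) = −1 and gcd(p−1, h) = 1, and φ_g(p) = 0 otherwise (also set φ_g(p) = 0 for p = 2 or p | g). Then the limit as N → ∞ of (1/N) · ∑_{i=1}^N φ_g(p_i), where p_i is the i-th prime, exists and equals A(g) = A_h · A_d, where A_h = ∏_{p | h} (1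 − 1/(p−1)) · ∏_{p ∤ h} (1 − 1/(p(p−1))) (products over primes p), and A_d = 1 − μ(|d|) · ∏_{q prime, q | d, q | h} 1/(q − 2) · ∏_{q prime, q | d, q ∤ h} 1/(q² − q − 1). -/
open Filter

section PartA
open MeasureTheory Filter Topology FourierTransform Complex
open scoped ContDiff Convolution

lemma kernel_base : ∃ (L : ℝ → ℂ) (K : ℝ → ℝ), Continuous L ∧ HasCompactSupport L ∧
    (∀ t, 0 ≤ K t) ∧ Integrable K ∧ ∫ t, K t = 1 ∧ ∀ t, 𝓕 L t = (K t : ℂ) := by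
  let b : ContDiffBump (0 : ℝ) := ⟨1, 2, by norm_num, by norm_num⟩
  let f0 : ℝ → ℂ := fun x => (b x : ℂ)
  have hf0c : ContDiff ℝ ∞ f0 := Complex.ofRealCLM.contDiff.comp b.contDiff
  have hf0s : HasCompactSupport f0 := b.hasCompactSupport.comp_left (g := fun x : ℝ => (x : ℂ)) (by simp)
  let f : SchwartzMap ℝ ℂ := hf0s.toSchwartzMap hf0c
  have hff : ∀ x, f x = f0 x := fun x => rfl
  have hff' : (f : ℝ → ℂ) = f0 := rfl
  have hfInt : Integrable f0 := hf0c.continuous.integrable_of_hasCompactSupport hf0s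
  have hconj : ∀ t, (starRingEnd ℂ) (𝓕 f0 t) = 𝓕 f0 t := by
    intro t
    rw [Real.fourier_real_eq_integral_exp_smul, ← integral_conj, ← integral_neg_eq_self]
    congr 1
    ext x
    have : f0 (-x) = f0 x := by simp [f0, b.neg]
    simp only [smul_eq_mul, map_mul, this, ← Complex.exp_conj, Complex.conj_ofReal, Complex.conj_I, f0]
    congr 2
    push_cast
    ring
  have hre : ∀ t, ((𝓕 f0 t).re : ℂ) = 𝓕 f0 t := fun t => (Complex.conj_eq_iff_re.mp (hconj t))
  let K0 : ℝ → ℝ := fun t => ((𝓕 f0 t).re) ^ 2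
  have hFc : Continuous (𝓕 f0) := by
    have := (𝓕 f).continuous
    rwa [SchwartzMap.fourier_coe, hff'] at this
  have hK0c : Continuous K0 := by
    fun_prop
  have hK0i : Integrable K0 := by
    have h1 : Integrable (fun t => (SchwartzMap.pairing (ContinuousLinearMap.mul ℂ ℂ) (𝓕 f) (𝓕 f)) t) := SchwartzMap.integrable _
    have h2 := h1.re
    refine h2.congr (ae_of_all _ fun t => ?_)
    simp only [SchwartzMap.pairing_apply_apply, SchwartzMap.fourier_coe, hff', K0, ContinuousLinearMap.mul_apply']
    rw [← hre t]
    simp [pow_two]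
  have h0 : 𝓕 f0 0 = ((∫ x, b x : ℝ) : ℂ) := by
    rw [Real.fourier_real_eq_integral_exp_smul, ← integral_complex_ofReal]
    simp [f0]
  have hpos : 0 < ∫ t, K0 t := by
    refine integral_pos_of_integrable_nonneg_nonzero (x := 0) hK0c hK0i (fun t => sq_nonneg _) ?_
    simp only [K0, h0, Complex.ofReal_re]
    exact pow_ne_zero 2 b.integral_pos.ne'
  set c := ∫ t, K0 t with hc
  obtain ⟨L0, hL0def⟩ : ∃ L0 : ℝ → ℂ, L0 = f0 ⋆[ContinuousLinearMap.mul ℂ ℂ] f0 := ⟨_, rfl⟩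
  have hL0 : ∀ t, 𝓕 L0 t = (K0 t : ℂ) := by
    intro t
    rw [hL0def, Real.fourier_mul_convolution_eq hfInt hfInt, ← hre t]
    simp [K0, pow_two]
  have hL0c : Continuous L0 := hL0def ▸ hf0s.continuous_convolution_right _ hfInt.locallyIntegrable hf0c.continuous
  have hL0s : HasCompactSupport L0 := hL0def ▸ hf0s.convolution _ hf0s
  refine ⟨fun x => ((c⁻¹ : ℝ) : ℂ) • L0 x, fun t => c⁻¹ * K0 t, by fun_prop, ?_, fun t => ?_, hK0i.const_mul _, ?_, ?_⟩
  · exact hL0s.comp_left (g := fun z : ℂ => ((c⁻¹ : ℝ) : ℂ) • z) (smul_zero _)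
  · exact mul_nonneg (inv_nonneg.2 hpos.le) (sq_nonneg _)
  · rw [integral_const_mul, ← hc, inv_mul_cancel₀ hpos.ne']
  · intro t
    have := hL0 t
    rw [Real.fourier_real_eq_integral_exp_smul] at this ⊢
    simp_rw [smul_comm _ (((c⁻¹ : ℝ) : ℂ))]
    rw [integral_smul, this]
    simp

lemma exists_kernel_s7 {η ε : ℝ} (hη : 0 < η) (hε : 0 < ε) :
    ∃ (L : ℝ → ℂ) (K : ℝ → ℝ), Continuous L ∧ HasCompactSupport L ∧
    (∀ t, 0 ≤ K t) ∧ Integrable K ∧ ∫ t, K t = 1 ∧ (∫ t in {t : ℝ | η < |t|}, K t) < ε ∧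
    ∀ t, 𝓕 L t = (K t : ℂ) := by
  obtain ⟨L, K, hLc, hLs, hK0, hKi, hK1, hLK⟩ := kernel_base
  have hmeas : ∀ r : ℝ, MeasurableSet {t : ℝ | r < |t|} := fun r => measurableSet_lt measurable_const (by fun_prop)
  have htail : Tendsto (fun n : ℕ => ∫ t, Set.indicator {t : ℝ | η * (n + 1) < |t|} K t) atTop (𝓝 (∫ t : ℝ, (0 : ℝ))) := by
    refine tendsto_integral_of_dominated_convergence K (fun n => (hKi.indicator (hmeas _)).aestronglyMeasurable) hKi ?_ ?_
    · intro n
      refine ae_of_all _ fun t => ?_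
      by_cases h : t ∈ {t : ℝ | η * (n + 1) < |t|}
      · rw [Set.indicator_of_mem h, Real.norm_eq_abs, abs_of_nonneg (hK0 t)]
      · rw [Set.indicator_of_notMem h]; simpa using hK0 t
    · refine ae_of_all _ fun t => ?_
      refine tendsto_const_nhds.congr' ?_
      obtain ⟨N, hN⟩ := exists_nat_gt (|t| / η)
      filter_upwards [eventually_ge_atTop N] with n hn
      rw [Set.indicator_of_notMem]
      simp only [Set.mem_ofPred_eq, not_lt]
      rw [div_lt_iff₀ hη] at hN
      have : (N : ℝ) ≤ n := by exact_mod_cast hn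
      nlinarith
  rw [integral_zero] at htail
  obtain ⟨n, hn⟩ := (htail.eventually (gt_mem_nhds hε)).exists
  set l : ℝ := n + 1 with hl
  have hlpos : 0 < l := by positivity
  refine ⟨fun x => L (l⁻¹ * x), fun t => l * K (l * t), by fun_prop, ?_, fun t => mul_nonneg hlpos.le (hK0 _), ?_, ?_, ?_, ?_⟩
  · exact hLs.comp_homeomorph (Homeomorph.mulLeft₀ l⁻¹ (inv_ne_zero hlpos.ne'))
  · exact (hKi.comp_mul_left' hlpos.ne').const_mul _
  · rw [integral_const_mul, Measure.integral_comp_mul_left K l, hK1]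
    simp [abs_of_pos hlpos, hlpos.ne']
  · rw [← integral_indicator (hmeas _)]
    have : ∀ t, Set.indicator {t : ℝ | η < |t|} (fun t => l * K (l * t)) t = l * (Set.indicator {t : ℝ | η * l < |t|} K) (l * t) := by
      intro t
      have : (l * t ∈ {t : ℝ | η * l < |t|}) ↔ t ∈ {t : ℝ | η < |t|} := by
        simp only [Set.mem_ofPred_eq, abs_mul, abs_of_pos hlpos]
        rw [mul_comm, mul_lt_mul_iff_right₀ hlpos]
      by_cases h : t ∈ {t : ℝ | η < |t|}
      · rw [Set.indicator_of_mem h, Set.indicator_of_mem (this.2 h)]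
      · rw [Set.indicator_of_notMem h, Set.indicator_of_notMem (fun h' => h (this.1 h')), mul_zero]
    simp_rw [this]
    rw [integral_const_mul, Measure.integral_comp_mul_left _ l]
    rw [abs_of_pos (by positivity), smul_eq_mul, ← mul_assoc, mul_inv_cancel₀ hlpos.ne', one_mul]
    exact hn
  · intro t
    have := hLK (l * t)
    rw [Real.fourier_real_eq_integral_exp_smul] at this ⊢
    have h2 := Measure.integral_comp_mul_left (fun v => cexp (↑(-2 * Real.pi * v * (l * t)) * I) • L v) l⁻¹
    rw [this] at h2
    have h3 : ∀ v : ℝ, -2 * Real.pi * (l⁻¹ * v) * (l * t) = -2 * Real.pi * v * t := by intro v; field_simp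
    simp_rw [h3] at h2
    rw [h2]
    simp [abs_of_pos hlpos]
end PartA

section PartB
open MeasureTheory Filter Topology FourierTransform Complex

lemma tauber_conv (R : ℝ → ℝ) (C : ℝ) (hRm : Measurable R) (hRC : ∀ t, |R t| ≤ C)
    (hR0 : ∀ t ≤ 0, R t = 0) (G : ℂ → ℂ) (hG : ContinuousOn G {z | 0 ≤ z.re})
    (hGL : ∀ z : ℂ, 0 < z.re → ∫ t, (R t : ℂ) * cexp (-z * t) = G z)
    (L : ℝ → ℂ) (K : ℝ → ℝ) (hLc : Continuous L) (hLs : HasCompactSupport L)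
    (hKi : Integrable K) (hLK : ∀ t, 𝓕 L t = (K t : ℂ)) :
    Tendsto (fun u => ∫ t, R t * K (t - u)) atTop (𝓝 0) := by
  have hCnn : 0 ≤ C := (abs_nonneg _).trans (hRC 0)
  have hline : ∀ δ : ℝ, 0 ≤ δ → Continuous (fun ξ : ℝ => G (δ + 2 * Real.pi * ξ * I)) := by
    intro δ hδ
    refine hG.comp_continuous (by fun_prop) (fun ξ => ?_)
    simp [hδ]
  have hLi : Integrable L := hLc.integrable_of_hasCompactSupport hLs
  let g : ℝ → ℝ → ℂ := fun u ξ => cexp (2 * Real.pi * u * ξ * I) * L ξ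
  have hgc : ∀ u, Continuous (g u) := fun u => by fun_prop
  have hgn : ∀ u ξ, ‖g u ξ‖ = ‖L ξ‖ := by
    intro u ξ
    have : (2 * Real.pi * u * ξ * I : ℂ) = ((2 * Real.pi * u * ξ : ℝ) : ℂ) * I := by push_cast; ring
    simp only [g, norm_mul, this, Complex.norm_exp_ofReal_mul_I, one_mul]
  have hgi : ∀ u, Integrable (g u) := fun u =>
    hLi.norm.mono' (hgc u).aestronglyMeasurable (ae_of_all _ fun ξ => (hgn u ξ).le)
  have hFg : ∀ u t, 𝓕 (g u) t = (K (t - u) : ℂ) := by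
    intro u t
    rw [← hLK, Real.fourier_real_eq_integral_exp_smul, Real.fourier_real_eq_integral_exp_smul]
    congr 1
    ext v
    simp only [g, smul_eq_mul]
    rw [← mul_assoc, ← Complex.exp_add]
    congr 2
    push_cast
    ring
  -- step 1
  have step1 : ∀ δ : ℝ, 0 < δ → ∀ u : ℝ,
      ∫ ξ : ℝ, G (δ + 2 * Real.pi * ξ * I) * g u ξ = ((∫ t, R t * Real.exp (-δ * t) * K (t - u) : ℝ) : ℂ) := by
    intro δ hδ u
    let f : ℝ → ℂ := fun t => ((R t * Real.exp (-δ * t) : ℝ) : ℂ)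
    have hfi : Integrable f := by
      suffices h : Integrable (fun t => R t * Real.exp (-δ * t)) from h.ofReal
      have h1 : IntegrableOn (fun t => C * Real.exp (-δ * t)) (Set.Ioi 0) :=
        (integrableOn_exp_mul_Ioi (by linarith) 0).const_mul C
      have h2 := h1.integrable_indicator measurableSet_Ioi
      refine h2.mono' (by fun_prop) (ae_of_all _ fun t => ?_)
      by_cases ht : 0 < t
      · rw [Set.indicator_of_mem (Set.mem_Ioi.2 ht), norm_mul, Real.norm_eq_abs, Real.norm_eq_abs, Real.abs_exp]
        gcongr
        exact hRC t
      · rw [hR0 t (not_lt.1 ht), Set.indicator_of_notMem (by simpa using ht)]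
        simp
    have hFf : ∀ ξ : ℝ, 𝓕 f ξ = G (δ + 2 * Real.pi * ξ * I) := by
      intro ξ
      rw [← hGL _ (by simp [hδ]), Real.fourier_real_eq_integral_exp_smul]
      congr 1
      ext t
      simp only [f, smul_eq_mul]
      push_cast
      rw [mul_comm, mul_assoc, ← Complex.exp_add]
      congr 2
      ring
    have key : ∫ ξ, 𝓕 f ξ • g u ξ = ∫ t, f t • 𝓕 (g u) t := by
      simpa using! (VectorFourier.integral_fourierIntegral_smul_eq_flip (L := innerₗ ℝ)
        Real.continuous_fourierChar continuous_inner hfi (hgi u))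
    simp_rw [hFf, hFg, smul_eq_mul] at key
    rw [key, ← integral_complex_ofReal]
    congr 1
    ext t
    simp [f]
  -- step 2
  have step2 : ∀ u : ℝ, ∫ ξ : ℝ, G (2 * Real.pi * ξ * I) * g u ξ = ((∫ t, R t * K (t - u) : ℝ) : ℂ) := by
    intro u
    have hKu : Integrable (fun t => K (t - u)) := hKi.comp_sub_right u
    have lim1 : Tendsto (fun δ : ℝ => ∫ ξ : ℝ, G (δ + 2 * Real.pi * ξ * I) * g u ξ) (𝓝[>] 0)
        (𝓝 (∫ ξ : ℝ, G (2 * Real.pi * ξ * I) * g u ξ)) := by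
      obtain ⟨B, hB⟩ : ∃ B, ∀ x ∈ (Set.Icc (0:ℝ) 1 ×ˢ tsupport L), ‖G (x.1 + 2 * Real.pi * x.2 * I)‖ ≤ B := by
        refine (isCompact_Icc.prod hLs).exists_bound_of_continuousOn (f := fun x : ℝ × ℝ => G (x.1 + 2 * Real.pi * x.2 * I)) ?_
        refine hG.comp (by fun_prop) ?_
        intro x hx
        simpa using hx.1.1
      refine tendsto_integral_filter_of_dominated_convergence (fun ξ => B * ‖L ξ‖) ?_ ?_ (hLi.norm.const_mul B) ?_
      · filter_upwards [self_mem_nhdsWithin] with δ hδ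
        exact ((hline δ (le_of_lt hδ)).mul (hgc u)).aestronglyMeasurable
      · filter_upwards [Ioo_mem_nhdsGT (zero_lt_one' ℝ)] with δ hδ
        refine ae_of_all _ fun ξ => ?_
        rw [norm_mul, hgn]
        by_cases h : ξ ∈ tsupport L
        · gcongr
          exact hB (δ, ξ) ⟨⟨hδ.1.le, hδ.2.le⟩, h⟩
        · simp [image_eq_zero_of_notMem_tsupport h]
      · refine ae_of_all _ fun ξ => ?_
        refine Tendsto.mul_const _ ?_
        have h0 : ContinuousWithinAt G {z | 0 ≤ z.re} (2 * Real.pi * ξ * I) := hG _ (by simp)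
        refine h0.tendsto.comp ?_
        refine tendsto_nhdsWithin_iff.2 ⟨?_, ?_⟩
        · have : Continuous (fun δ : ℝ => (δ + 2 * Real.pi * ξ * I : ℂ)) := by fun_prop
          have := this.tendsto 0
          simp only [Complex.ofReal_zero, zero_add] at this
          exact this.mono_left nhdsWithin_le_nhds
        · filter_upwards [self_mem_nhdsWithin] with δ hδ
          have : (0:ℝ) < δ := hδ
          simp [this.le]
    have lim2 : Tendsto (fun δ : ℝ => ((∫ t, R t * Real.exp (-δ * t) * K (t - u) : ℝ) : ℂ)) (𝓝[>] 0)
        (𝓝 ((∫ t, R t * K (t - u) : ℝ) : ℂ)) := by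
      refine (Complex.continuous_ofReal.tendsto _).comp ?_
      refine tendsto_integral_filter_of_dominated_convergence (fun t => C * ‖K (t - u)‖) ?_ ?_ (hKu.norm.const_mul C) ?_
      · refine Eventually.of_forall fun δ => ?_
        exact AEStronglyMeasurable.mul (by fun_prop) hKu.aestronglyMeasurable
      · filter_upwards [self_mem_nhdsWithin] with δ hδ
        have hδ' : 0 < δ := hδ
        refine ae_of_all _ fun t => ?_
        rw [norm_mul]
        gcongr
        rw [norm_mul, Real.norm_eq_abs, Real.norm_eq_abs, Real.abs_exp]
        by_cases ht : 0 < t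
        · calc |R t| * Real.exp (-δ * t) ≤ C * 1 := by
                gcongr
                · exact hRC t
                · rw [Real.exp_le_one_iff]; nlinarith
            _ = C := mul_one C
        · rw [hR0 t (not_lt.1 ht)]; simpa
      · refine ae_of_all _ fun t => ?_
        refine Tendsto.mul_const _ ?_
        have : Continuous (fun δ : ℝ => R t * Real.exp (-δ * t)) := by fun_prop
        have := this.tendsto 0
        simp only [neg_zero, zero_mul, Real.exp_zero, mul_one] at this
        exact this.mono_left nhdsWithin_le_nhds
    refine tendsto_nhds_unique lim1 (lim2.congr' ?_)
    filter_upwards [self_mem_nhdsWithin] with δ hδ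
    exact (step1 δ hδ u).symm
  -- step 3
  have hrl := Real.zero_at_infty_fourier (fun ξ : ℝ => G (2 * Real.pi * ξ * I) * L ξ)
  have h3 : Tendsto (fun u : ℝ => 𝓕 (fun ξ : ℝ => G (2 * Real.pi * ξ * I) * L ξ) (-u)) atTop (𝓝 0) := by
    refine hrl.comp ?_
    exact tendsto_neg_atTop_atBot.mono_right atBot_le_cocompact
  have h4 : ∀ u : ℝ, 𝓕 (fun ξ : ℝ => G (2 * Real.pi * ξ * I) * L ξ) (-u) = ((∫ t, R t * K (t - u) : ℝ) : ℂ) := by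
    intro u
    rw [← step2, Real.fourier_real_eq_integral_exp_smul]
    congr 1
    ext ξ
    simp only [g, smul_eq_mul]
    rw [mul_left_comm]
    congr 3
    push_cast
    ring
  simp_rw [h4] at h3
  exact (Complex.continuous_re.tendsto _).comp h3

theorem tauberian (S : ℝ → ℝ) (A C : ℝ) (hA : 0 ≤ A) (hSm : Measurable S) (hSnn : ∀ t, 0 ≤ S t)
    (hSC : ∀ t, S t ≤ C) (hS0 : ∀ t ≤ 0, S t = 0)
    (hmono : ∀ s t, s ≤ t → S s * Real.exp s ≤ S t * Real.exp t)
    (G : ℂ → ℂ) (hG : ContinuousOn G {z | 0 ≤ z.re})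
    (hGL : ∀ z : ℂ, 0 < z.re → ∫ t in Set.Ioi (0:ℝ), ((S t - A : ℝ) : ℂ) * cexp (-z * t) = G z) :
    Tendsto S atTop (𝓝 A) := by
  have hCnn : 0 ≤ C := (hSnn 0).trans (hSC 0)
  let R : ℝ → ℝ := Set.indicator (Set.Ioi 0) (fun t => S t - A)
  have hRm : Measurable R := (hSm.sub_const A).indicator measurableSet_Ioi
  have hRC : ∀ t, |R t| ≤ C + A := by
    intro t
    by_cases ht : t ∈ Set.Ioi (0:ℝ)
    · simp only [R, Set.indicator_of_mem ht]
      rw [abs_le]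
      constructor <;> linarith [hSnn t, hSC t]
    · simp only [R, Set.indicator_of_notMem ht, abs_zero]; positivity
  have hR0 : ∀ t ≤ 0, R t = 0 := fun t ht => Set.indicator_of_notMem (by simpa using ht) _
  have hGL' : ∀ z : ℂ, 0 < z.re → ∫ t, (R t : ℂ) * cexp (-z * t) = G z := by
    intro z hz
    rw [← hGL z hz, ← integral_indicator measurableSet_Ioi]
    congr 1
    ext t
    by_cases ht : t ∈ Set.Ioi (0:ℝ)
    · simp only [R, Set.indicator_of_mem ht]
    · simp only [R, Set.indicator_of_notMem ht]; simp
  have main : ∀ ε : ℝ, 0 < ε → ε < 1 → ∀ᶠ u in atTop,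
      (A * (1 - ε) - ε - C * ε) * Real.exp (-(2 * ε)) ≤ S (u + ε) ∧
      S (u - ε) ≤ (A + ε) * Real.exp (2 * ε) / (1 - ε) := by
    intro ε hε hε1
    obtain ⟨L, K, hLc, hLs, hK0, hKi, hK1, hKε, hLK⟩ := exists_kernel_s7 hε hε
    have hmeas : MeasurableSet {t : ℝ | ε < |t|} := measurableSet_lt measurable_const (by fun_prop)
    have hc := tauber_conv R (C + A) hRm hRC hR0 G hG hGL' L K hLc hLs hKi hLK
    have hcompl : (∫ t in {t : ℝ | ε < |t|}ᶜ, K t) = 1 - ∫ t in {t : ℝ | ε < |t|}, K t := by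
      rw [← hK1, ← integral_add_compl hmeas hKi]; ring
    filter_upwards [hc.eventually (Ioo_mem_nhds (neg_lt_zero.2 hε) hε), eventually_gt_atTop ε] with u hu huε
    have hSK : Integrable (fun v => S (v + u) * K v) := by
      refine (hKi.norm.const_mul C).mono' ?_ (ae_of_all _ fun v => ?_)
      · exact AEStronglyMeasurable.mul (hSm.comp (measurable_id.add_const u)).aestronglyMeasurable hKi.aestronglyMeasurable
      · rw [norm_mul]
        gcongr
        rw [Real.norm_eq_abs, abs_of_nonneg (hSnn _)]
        exact hSC _
    have hm2 : MeasurableSet {v : ℝ | 0 < v + u} := measurableSet_lt measurable_const (by fun_prop)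
    have hI : ∫ t, R t * K (t - u) = (∫ v, S (v + u) * K v) - A * ∫ v in {v : ℝ | 0 < v + u}, K v := by
      rw [← integral_add_right_eq_self _ u, ← integral_const_mul, ← integral_indicator hm2, ← integral_sub hSK ((hKi.const_mul A).indicator hm2)]
      congr 1
      ext v
      by_cases hv : 0 < v + u
      · rw [Set.indicator_of_mem (show v ∈ {v : ℝ | 0 < v + u} from hv)]
        simp only [R, Set.indicator_of_mem (Set.mem_Ioi.2 hv), add_sub_cancel_right]
        ring
      · rw [Set.indicator_of_notMem (show v ∉ {v : ℝ | 0 < v + u} from hv), hR0 _ (not_lt.1 hv), hS0 _ (not_lt.1 hv)]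
        ring
    have hJ1 : ∫ v in {v : ℝ | 0 < v + u}, K v ≤ 1 := by
      rw [← hK1]
      exact setIntegral_le_integral hKi (ae_of_all _ hK0)
    have hJ2 : 1 - ε ≤ ∫ v in {v : ℝ | 0 < v + u}, K v := by
      have : (∫ t in {t : ℝ | ε < |t|}ᶜ, K t) ≤ ∫ v in {v : ℝ | 0 < v + u}, K v := by
        refine setIntegral_mono_set hKi.integrableOn (ae_of_all _ hK0) (LE.le.eventuallyLE ?_)
        intro v hv
        have hv' : |v| ≤ ε := not_lt.1 hv
        have := (abs_le.1 hv').1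
        show 0 < v + u
        linarith
      linarith
    have hJ3 := mul_le_mul_of_nonneg_left hJ1 hA
    have hJ4 := mul_le_mul_of_nonneg_left hJ2 hA
    rw [hI] at hu
    obtain ⟨hu1, hu2⟩ := hu
    constructor
    · have h1 : (∫ v, S (v + u) * K v) ≤ Real.exp (2 * ε) * S (u + ε) * 1 + C * ε := by
        calc (∫ v, S (v + u) * K v) ≤ ∫ v, (Real.exp (2 * ε) * S (u + ε) * K v + C * Set.indicator {t : ℝ | ε < |t|} K v) := by
              refine integral_mono hSK ((hKi.const_mul _).add ((hKi.indicator hmeas).const_mul C)) fun v => ?_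
              by_cases hv : ε < |v|
              · simp only
                rw [Set.indicator_of_mem (show v ∈ {t : ℝ | ε < |t|} from hv)]
                have h1 := mul_le_mul_of_nonneg_right (hSC (v + u)) (hK0 v)
                have h2 : 0 ≤ Real.exp (2 * ε) * S (u + ε) * K v := by
                  have := hSnn (u + ε); have := hK0 v; positivity
                linarith
              · simp only
                rw [Set.indicator_of_notMem (show v ∉ {t : ℝ | ε < |t|} from hv), mul_zero, add_zero]
                refine mul_le_mul_of_nonneg_right ?_ (hK0 v)
                obtain ⟨hv1, hv2⟩ := abs_le.1 (not_lt.1 hv)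
                have h1 := hmono (v + u) (u + ε) (by linarith)
                have h2 : S (v + u) ≤ S (u + ε) * Real.exp (ε - v) := by
                  have : Real.exp (ε - v) = Real.exp (u + ε) / Real.exp (v + u) := by
                    rw [← Real.exp_sub]; congr 1; ring
                  rw [this, ← mul_div_assoc, le_div_iff₀ (Real.exp_pos _)]
                  exact h1
                calc _ ≤ _ := h2
                  _ ≤ S (u + ε) * Real.exp (2 * ε) := by
                    gcongr
                    · exact hSnn _
                    · linarith
                  _ = _ := mul_comm _ _
          _ = Real.exp (2 * ε) * S (u + ε) * 1 + C * ∫ t in {t : ℝ | ε < |t|}, K t := by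
              rw [integral_add (hKi.const_mul _) ((hKi.indicator hmeas).const_mul C), integral_const_mul, integral_const_mul, hK1, integral_indicator hmeas]
          _ ≤ _ := by gcongr
      rw [Real.exp_neg, ← div_eq_mul_inv, div_le_iff₀ (Real.exp_pos _)]
      linarith
    · have h1 : S (u - ε) * Real.exp (-(2 * ε)) * (1 - ε) ≤ (∫ v, S (v + u) * K v) := by
        calc S (u - ε) * Real.exp (-(2 * ε)) * (1 - ε) ≤ S (u - ε) * Real.exp (-(2 * ε)) * ∫ t in {t : ℝ | ε < |t|}ᶜ, K t := by
              have := hSnn (u - ε)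
              gcongr
              linarith
          _ = ∫ v, S (u - ε) * Real.exp (-(2 * ε)) * Set.indicator {t : ℝ | ε < |t|}ᶜ K v := by
              rw [integral_const_mul, integral_indicator hmeas.compl]
          _ ≤ _ := by
              refine integral_mono ((hKi.indicator hmeas.compl).const_mul _) hSK fun v => ?_
              by_cases hv : ε < |v|
              · simp only
                rw [Set.indicator_of_notMem (show v ∉ {t : ℝ | ε < |t|}ᶜ from fun h => h hv), mul_zero]
                exact mul_nonneg (hSnn _) (hK0 _)
              · simp only
                rw [Set.indicator_of_mem (show v ∈ {t : ℝ | ε < |t|}ᶜ from hv)]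
                refine mul_le_mul_of_nonneg_right ?_ (hK0 v)
                obtain ⟨hv1, hv2⟩ := abs_le.1 (not_lt.1 hv)
                have h1 := hmono (u - ε) (v + u) (by linarith)
                calc S (u - ε) * Real.exp (-(2 * ε)) ≤ S (u - ε) * Real.exp (-(ε + v)) := by
                      gcongr
                      · exact hSnn _
                      · linarith
                  _ = S (u - ε) * Real.exp (u - ε) / Real.exp (v + u) := by
                      rw [mul_div_assoc, ← Real.exp_sub]; congr 2; ring
                  _ ≤ _ := by rwa [div_le_iff₀ (Real.exp_pos _)]
      rw [le_div_iff₀ (by linarith)]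
      rw [Real.exp_neg, mul_right_comm, ← div_eq_mul_inv, div_le_iff₀ (Real.exp_pos _)] at h1
      refine h1.trans ?_
      gcongr
      linarith
  rw [Metric.tendsto_atTop']
  intro d hd
  have c1 : Tendsto (fun ε : ℝ => (A * (1 - ε) - ε - C * ε) * Real.exp (-(2 * ε))) (𝓝[>] 0) (𝓝 A) := by
    have : Continuous (fun ε : ℝ => (A * (1 - ε) - ε - C * ε) * Real.exp (-(2 * ε))) := by fun_prop
    have := this.tendsto 0
    simp at this
    exact this.mono_left nhdsWithin_le_nhds
  have c2 : Tendsto (fun ε : ℝ => (A + ε) * Real.exp (2 * ε) / (1 - ε)) (𝓝[>] 0) (𝓝 A) := by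
    have : ContinuousAt (fun ε : ℝ => (A + ε) * Real.exp (2 * ε) / (1 - ε)) 0 := by
      refine ContinuousAt.div (by fun_prop) (by fun_prop) (by norm_num)
    have := this.tendsto
    simp at this
    exact this.mono_left nhdsWithin_le_nhds
  obtain ⟨ε, ⟨h1, h2⟩, h3, h4⟩ := ((c1.eventually (lt_mem_nhds (show A - d < A by linarith))).and
    (c2.eventually (gt_mem_nhds (show A < A + d by linarith)))).and
    (Ioo_mem_nhdsGT (zero_lt_one' ℝ)) |>.exists
  obtain ⟨N, hN⟩ := eventually_atTop.1 (main ε h3 h4)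
  refine ⟨N + ε, fun u hu => ?_⟩
  have e1 := (hN (u - ε) (by linarith)).1
  have e2 := (hN (u + ε) (by linarith)).2
  rw [sub_add_cancel] at e1
  rw [add_sub_cancel_right] at e2
  rw [Real.dist_eq, abs_lt]
  constructor <;> linarith
end PartB

section PartC
open MeasureTheory Filter Topology Complex
open ArithmeticFunction.vonMangoldt (residueClass LFunctionResidueClassAux)

noncomputable def psiAP {q : ℕ} (a : ZMod q) (x : ℝ) : ℝ := ∑ k ∈ Finset.Icc 1 ⌊x⌋₊, residueClass a k

lemma psiAP_mono {q : ℕ} (a : ZMod q) : Monotone (psiAP a) := by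
  intro x y hxy
  refine Finset.sum_le_sum_of_subset_of_nonneg ?_ ?_
  · exact Finset.Icc_subset_Icc_right (Nat.floor_le_floor hxy)
  · intro i _ _
    exact ArithmeticFunction.vonMangoldt.residueClass_nonneg a i

lemma psiAP_nonneg {q : ℕ} (a : ZMod q) (x : ℝ) : 0 ≤ psiAP a x :=
  Finset.sum_nonneg fun i _ => ArithmeticFunction.vonMangoldt.residueClass_nonneg a i

lemma psiAP_le {q : ℕ} (a : ZMod q) {x : ℝ} (hx : 0 ≤ x) : psiAP a x ≤ (Real.log 4 + 4) * x := by
  refine le_trans ?_ (Chebyshev.psi_le_const_mul_self hx)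
  rw [Chebyshev.psi]
  refine Finset.sum_le_sum fun i _ => ArithmeticFunction.vonMangoldt.residueClass_le a i

lemma psiAP_LSeries {q : ℕ} (a : ZMod q) {s : ℂ} (hs : 1 < s.re) :
    LSeries (fun n => (residueClass a n : ℂ)) s =
      s * ∫ t in Set.Ioi (0:ℝ), (psiAP a (Real.exp t) : ℂ) * cexp (-s * t) := by
  have hO : (fun n : ℕ => ∑ k ∈ Finset.Icc 1 n, residueClass a k) =O[atTop] fun n => (n : ℝ) ^ (1:ℝ) := by
    refine Asymptotics.IsBigO.of_bound (Real.log 4 + 4) (Eventually.of_forall fun n => ?_)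
    have h1 := psiAP_le a (Nat.cast_nonneg n)
    have h2 := psiAP_nonneg a n
    rw [psiAP, Nat.floor_natCast] at h1 h2
    rw [Real.norm_eq_abs, abs_of_nonneg h2]
    simpa using h1
  rw [LSeries_eq_mul_integral_of_nonneg _ zero_le_one hs hO (ArithmeticFunction.vonMangoldt.residueClass_nonneg a)]
  congr 1
  have himg : Real.exp '' (Set.Ioi 0) = Set.Ioi (1:ℝ) := by
    ext x
    constructor
    · rintro ⟨t, ht, rfl⟩
      exact Real.one_lt_exp_iff.2 ht
    · intro hx
      exact ⟨Real.log x, Real.log_pos hx, Real.exp_log (zero_lt_one.trans hx)⟩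
  rw [← himg, integral_image_eq_integral_abs_deriv_smul (f' := Real.exp) measurableSet_Ioi
    (fun x _ => (Real.hasDerivAt_exp x).hasDerivWithinAt) Real.exp_injective.injOn]
  refine setIntegral_congr_fun measurableSet_Ioi fun t _ => ?_
  simp only [Real.abs_exp, psiAP]
  rw [Complex.cpow_def_of_ne_zero (by simp [Complex.exp_ne_zero]), ← Complex.ofReal_log (Real.exp_pos t).le, Real.log_exp]
  rw [Complex.real_smul, mul_left_comm, Complex.ofReal_exp, ← Complex.exp_add, Complex.ofReal_sum]
  congr 2
  ring

theorem psiAP_tendsto {q : ℕ} [NeZero q] {a : ZMod q} (ha : IsUnit a) :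
    Tendsto (fun x : ℝ => psiAP a x / x) atTop (𝓝 ((q.totient : ℝ)⁻¹)) := by
  let S : ℝ → ℝ := fun t => psiAP a (Real.exp t) * Real.exp (-t)
  have hSm : Measurable S := ((psiAP_mono a).measurable.comp Real.measurable_exp).mul (by fun_prop)
  have hSnn : ∀ t, 0 ≤ S t := fun t => mul_nonneg (psiAP_nonneg a _) (Real.exp_pos _).le
  have hSC : ∀ t, S t ≤ Real.log 4 + 4 := by
    intro t
    have := psiAP_le a (Real.exp_pos t).le
    simp only [S, Real.exp_neg]
    rwa [← div_eq_mul_inv, div_le_iff₀ (Real.exp_pos t)]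
  have hS0 : ∀ t ≤ 0, S t = 0 := by
    intro t ht
    have h1 : psiAP a (Real.exp t) ≤ psiAP a 1 := psiAP_mono a (Real.exp_le_one_iff.2 ht)
    have h2 : psiAP a 1 = 0 := by
      have := ArithmeticFunction.vonMangoldt.residueClass_le a 1
      have h3 := ArithmeticFunction.vonMangoldt.residueClass_nonneg a 1
      simp at this
      simp [psiAP]
    have h4 := psiAP_nonneg a (Real.exp t)
    have : psiAP a (Real.exp t) = 0 := by linarith
    simp [S, this]
  have hmono : ∀ s t, s ≤ t → S s * Real.exp s ≤ S t * Real.exp t := by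
    intro s t hst
    simp only [S, mul_assoc, ← Real.exp_add]
    simpa using psiAP_mono a (Real.exp_le_exp.2 hst)
  set A : ℝ := (q.totient : ℝ)⁻¹ with hA
  have hA0 : 0 ≤ A := by positivity
  let G : ℂ → ℂ := fun z => (LFunctionResidueClassAux a (1 + z) - A) / (1 + z)
  have hG : ContinuousOn G {z | 0 ≤ z.re} := by
    refine ContinuousOn.div (ContinuousOn.sub ?_ continuousOn_const) (by fun_prop) ?_
    · refine (ArithmeticFunction.vonMangoldt.continuousOn_LFunctionResidueClassAux a).comp (by fun_prop) ?_
      intro z hz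
      have : 0 ≤ z.re := hz
      simpa using this
    · intro z hz h
      have : 0 ≤ z.re := hz
      have := congrArg Complex.re h
      simp at this
      linarith
  have hGL : ∀ z : ℂ, 0 < z.re → ∫ t in Set.Ioi (0:ℝ), ((S t - A : ℝ) : ℂ) * cexp (-z * t) = G z := by
    intro z hz
    have hz0 : z ≠ 0 := by rintro rfl; simp at hz
    have hz1 : 1 + z ≠ 0 := by
      intro h
      have := congrArg Complex.re h
      simp at this
      linarith
    have he : IntegrableOn (fun t : ℝ => cexp (-z * t)) (Set.Ioi 0) := integrableOn_exp_mul_complex_Ioi (by simpa) 0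
    have hint1 : IntegrableOn (fun t : ℝ => (S t : ℂ) * cexp (-z * t)) (Set.Ioi 0) := by
      refine Integrable.mono' (he.norm.const_mul (Real.log 4 + 4)) ?_ (ae_of_all _ fun t => ?_)
      · exact (Complex.measurable_ofReal.comp hSm).aestronglyMeasurable.mul he.aestronglyMeasurable
      · rw [norm_mul]
        gcongr
        rw [Complex.norm_real, Real.norm_eq_abs, abs_of_nonneg (hSnn t)]
        exact hSC t
    have hl := psiAP_LSeries a (s := 1 + z) (by simpa using hz)
    have hx := ArithmeticFunction.vonMangoldt.eqOn_LFunctionResidueClassAux ha (x := 1 + z) (by simpa using hz)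
    simp only [add_sub_cancel_left] at hx
    have h1 : ∫ t in Set.Ioi (0:ℝ), (S t : ℂ) * cexp (-z * t) = ∫ t in Set.Ioi (0:ℝ), (psiAP a (Real.exp t) : ℂ) * cexp (-(1 + z) * t) := by
      refine setIntegral_congr_fun measurableSet_Ioi fun t _ => ?_
      simp only [S]
      push_cast
      rw [mul_assoc, ← Complex.exp_add]
      congr 2
      ring
    have h2 : ∫ t in Set.Ioi (0:ℝ), cexp (-z * t) = 1 / z := by
      rw [integral_exp_mul_complex_Ioi (by simpa)]
      simp
    have h3 : ∀ t : ℝ, ((S t - A : ℝ) : ℂ) * cexp (-z * t) = (S t : ℂ) * cexp (-z * t) - A * cexp (-z * t) := by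
      intro t; push_cast; ring
    simp_rw [h3]
    rw [integral_sub hint1 (he.const_mul _), integral_const_mul, h2, h1]
    simp only [G, hx, hl]
    have hAc : (A : ℂ) = (q.totient : ℂ)⁻¹ := by rw [hA]; push_cast; rfl
    rw [← hAc]
    field_simp
    ring
  have := (tauberian S A _ hA0 hSm hSnn hSC hS0 hmono G hG hGL).comp Real.tendsto_log_atTop
  refine this.congr' ?_
  filter_upwards [eventually_gt_atTop 0] with x hx
  simp only [S, Function.comp, Real.exp_neg, Real.exp_log hx]
  rfl

theorem thetaAP_tendsto {q : ℕ} [NeZero q] {a : ZMod q} (ha : IsUnit a) :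
    Tendsto (fun N : ℕ => (∑ p ∈ Nat.primesLE N, (if (p : ZMod q) = a then 1 else 0) * Real.log p) / N)
      atTop (𝓝 ((q.totient : ℝ)⁻¹)) := by
  have h1 : Tendsto (fun N : ℕ => psiAP a (N : ℝ) / N) atTop (𝓝 ((q.totient : ℝ)⁻¹)) :=
    (psiAP_tendsto ha).comp tendsto_natCast_atTop_atTop
  obtain ⟨C, hC⟩ := Chebyshev.psi_sub_theta_le_mul_sqrt
  have h2 : Tendsto (fun N : ℕ => C / √(N : ℝ)) atTop (𝓝 0) :=
    (Real.tendsto_sqrt_atTop.comp tendsto_natCast_atTop_atTop).const_div_atTop C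
  have h3 : Tendsto (fun N : ℕ => psiAP a (N : ℝ) / N - (∑ p ∈ Nat.primesLE N, (if (p : ZMod q) = a then 1 else 0) * Real.log p) / N) atTop (𝓝 0) := by
    have key : ∀ N : ℕ, psiAP a (N : ℝ) - (∑ p ∈ Nat.primesLE N, (if (p : ZMod q) = a then 1 else 0) * Real.log p)
        = ∑ n ∈ Finset.Icc 1 N, if n.Prime then 0 else residueClass a n := by
      intro N
      have hprime : ∀ p : ℕ, p.Prime → residueClass a p = (if (p : ZMod q) = a then 1 else 0) * Real.log p := by
        intro p hp
        rw [residueClass]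
        by_cases h : (p : ZMod q) = a
        · rw [Set.indicator_of_mem (by exact h)]
          simp [h, ArithmeticFunction.vonMangoldt_apply_prime hp]
        · rw [Set.indicator_of_notMem (by exact h)]
          simp [h]
      rw [psiAP, Nat.floor_natCast, Nat.primesLE_eq_filter_Icc_one, Finset.sum_filter, ← Finset.sum_sub_distrib]
      refine Finset.sum_congr rfl fun n _ => ?_
      split_ifs with h1 h2 h2
      · rw [hprime n h1, if_pos h2, sub_self]
      · rw [hprime n h1, if_neg h2, sub_self]
      all_goals simp
    have key2 : ∀ N : ℕ, Chebyshev.psi N - Chebyshev.theta N = ∑ n ∈ Finset.Icc 1 N, if n.Prime then 0 else ArithmeticFunction.vonMangoldt n := by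
      intro N
      rw [Chebyshev.theta_eq_sum_primesLE_log, Chebyshev.psi, Nat.floor_natCast, Nat.primesLE_eq_filter_Icc_one, Finset.sum_filter]
      rw [← Finset.Icc_add_one_left_eq_Ioc, zero_add, ← Finset.sum_sub_distrib]
      refine Finset.sum_congr rfl fun n _ => ?_
      split_ifs with h1
      · rw [ArithmeticFunction.vonMangoldt_apply_prime h1, sub_self]
      · simp
    refine squeeze_zero' ?_ ?_ h2
    · refine Eventually.of_forall fun N => ?_
      rw [← sub_div, key]
      refine div_nonneg (Finset.sum_nonneg fun n _ => ?_) (Nat.cast_nonneg _)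
      split_ifs
      · rfl
      · exact ArithmeticFunction.vonMangoldt.residueClass_nonneg a n
    · filter_upwards [eventually_gt_atTop 0] with N hN
      have hN' : (0:ℝ) < N := by exact_mod_cast hN
      rw [← sub_div, div_le_div_iff₀ hN' (Real.sqrt_pos.2 hN')]
      have : psiAP a (N : ℝ) - (∑ p ∈ Nat.primesLE N, (if (p : ZMod q) = a then 1 else 0) * Real.log p) ≤ C * √N := by
        refine le_trans ?_ (hC N)
        rw [key, key2]
        refine Finset.sum_le_sum fun n _ => ?_
        split_ifs
        · rfl
        · exact ArithmeticFunction.vonMangoldt.residueClass_le a n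
      calc _ ≤ C * √N * √N := by gcongr
        _ = _ := by rw [mul_assoc, Real.mul_self_sqrt hN'.le]
  have := h1.sub h3
  simpa using this
end PartC

section PartD
open Filter Topology

lemma brun_aux {q : ℕ} (hq : q.Prime) (M : ℕ) (S : Finset ℕ) (hS : ∀ p ∈ S, p.Prime ∧ M < p ∧ ∃ m < M, p = q * m + 1) :
    ∑ p ∈ S, Real.log p ≤ 2 * M * Real.log q := by
  set P : ℕ := ∏ m ∈ Finset.range M, (q * m + 1) with hP
  set v := (M.factorial).factorization q with hv
  set B := M.factorial / q ^ v with hB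
  have hMf : M.factorial ≠ 0 := Nat.factorial_ne_zero M
  have hfac : q ^ v * B = M.factorial := Nat.ordProj_mul_ordCompl_eq_self _ _
  have hBcop : Nat.Coprime q B := Nat.coprime_ordCompl hq hMf
  have hB0 : B ≠ 0 := by rintro h; rw [h, mul_zero] at hfac; exact hMf hfac.symm
  have hBdvd : B ∣ M.factorial := ⟨q ^ v, by rw [mul_comm, hfac]⟩
  have : NeZero B := ⟨hB0⟩
  have hBP : B ∣ P := by
    rw [← ZMod.natCast_eq_zero_iff]
    set u : (ZMod B)ˣ := ZMod.unitOfCoprime q hBcop with hu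
    set a : ℕ := ((u⁻¹ : (ZMod B)ˣ) : ZMod B).val with ha
    have ha1 : (q : ZMod B) * (a : ZMod B) = 1 := by
      rw [ha, ZMod.natCast_zmod_val, ← ZMod.coe_unitOfCoprime q hBcop, ← hu, Units.mul_inv]
    have h1 : (P : ZMod B) = (q : ZMod B) ^ M * ((a.ascFactorial M : ℕ) : ZMod B) := by
      rw [hP, Nat.ascFactorial_eq_prod_range]
      push_cast
      rw [← Finset.card_range M, ← Finset.prod_const, Finset.card_range, ← Finset.prod_mul_distrib]
      refine Finset.prod_congr rfl fun m _ => ?_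
      rw [mul_add, ha1, add_comm]
    rw [h1, (ZMod.natCast_eq_zero_iff _ _).2 (hBdvd.trans (Nat.factorial_dvd_ascFactorial a M)), mul_zero]
  have hSP : ∏ p ∈ S, p ∣ P := by
    refine Finset.prod_primes_dvd P (fun p hp => (hS p hp).1.prime) fun p hp => ?_
    obtain ⟨m, hm, rfl⟩ := (hS p hp).2.2
    exact Finset.dvd_prod_of_mem _ (Finset.mem_range.2 hm)
  have hcop : Nat.Coprime B (∏ p ∈ S, p) := by
    refine Nat.Coprime.prod_right fun p hp => ?_
    have h2 := hS p hp
    refine Nat.Coprime.coprime_dvd_left hBdvd ?_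
    rw [Nat.coprime_comm, h2.1.coprime_iff_not_dvd, h2.1.dvd_factorial]
    omega
  have hP0 : 0 < P := Finset.prod_pos fun m _ => by omega
  have hle : B * ∏ p ∈ S, p ≤ P := Nat.le_of_dvd hP0 (hcop.mul_dvd_of_dvd_of_dvd hBP hSP)
  have hPle : P ≤ q ^ M * M.factorial := by
    rw [← Finset.prod_range_add_one_eq_factorial, ← Finset.card_range M, ← Finset.prod_const, Finset.card_range, ← Finset.prod_mul_distrib]
    refine Finset.prod_le_prod' fun m _ => ?_
    have := hq.one_lt
    nlinarith
  have hvM : v ≤ M := by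
    have := Fact.mk hq
    have h1 := @sub_one_mul_padicValNat_factorial q _ M
    rw [hv, Nat.factorization_def _ hq]
    have h2 := hq.two_le
    have : padicValNat q M.factorial ≤ (q - 1) * padicValNat q M.factorial := Nat.le_mul_of_pos_left _ (by omega)
    omega
  have hqpos : (0:ℝ) < q := by exact_mod_cast hq.pos
  have hfin : (∏ p ∈ S, p : ℕ) ≤ q ^ (2 * M) := by
    have : B * ∏ p ∈ S, p ≤ B * q ^ (2 * M) := by
      calc _ ≤ q ^ M * (q ^ v * B) := by rw [hfac]; exact hle.trans hPle
        _ = B * q ^ (M + v) := by ring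
        _ ≤ _ := Nat.mul_le_mul_left _ (Nat.pow_le_pow_right hq.pos (by omega))
    exact Nat.le_of_mul_le_mul_left this (Nat.pos_of_ne_zero hB0)
  have hpos : (0:ℝ) < ((∏ p ∈ S, p : ℕ) : ℝ) := by
    exact_mod_cast Finset.prod_pos fun p hp => (hS p hp).1.pos
  have hl := Real.log_le_log hpos (by exact_mod_cast hfin : ((∏ p ∈ S, p : ℕ) : ℝ) ≤ (q:ℝ) ^ (2 * M))
  rw [Real.log_pow] at hl
  push_cast at hl
  rwa [Real.log_prod (fun p hp => by exact_mod_cast (hS p hp).1.ne_zero)] at hl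

lemma brun {q : ℕ} (hq : q.Prime) (N : ℕ) :
    ∑ p ∈ Nat.primesLE N with q ∣ p - 1, Real.log p ≤ 8 * N * (Real.log q / q) := by
  have hlog : Real.log 2 ≤ Real.log q := Real.log_le_log (by norm_num) (by exact_mod_cast hq.two_le)
  have hlog2 : 0 < Real.log 2 := Real.log_pos (by norm_num)
  have hqpos : (0:ℝ) < q := by exact_mod_cast hq.pos
  rcases lt_or_ge N q with hN | hN
  · rw [Finset.sum_eq_zero]
    · positivity
    · intro p hp
      rw [Finset.mem_filter, Nat.mem_primesLE] at hp
      have h1 := hp.1.2.two_le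
      have := Nat.le_of_dvd (by omega) hp.2
      omega
  set M := (N - 1) / q + 1 with hM
  have hMN : (M:ℝ) ≤ 2 * N / q := by
    rw [le_div_iff₀ hqpos]
    have : M * q ≤ 2 * N := by
      rw [hM, add_mul]
      have := Nat.div_mul_le_self (N-1) q
      omega
    exact_mod_cast this
  have h1 : ∑ p ∈ Nat.primesLE N with q ∣ p - 1, Real.log p ≤ ∑ p ∈ (Nat.primesLE N).filter (fun p => q ∣ p - 1 ∧ M < p), Real.log p + ∑ p ∈ Nat.primesLE M, Real.log p := by
    rw [← Finset.sum_filter_add_sum_filter_not (Finset.filter _ _) (fun p => M < p), Finset.filter_filter]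
    gcongr
    intro p hp
    simp only [Finset.mem_filter, Nat.mem_primesLE, not_lt] at hp ⊢
    exact ⟨hp.2, hp.1.1.2⟩
  have h2 : ∑ p ∈ (Nat.primesLE N).filter (fun p => q ∣ p - 1 ∧ M < p), Real.log p ≤ 2 * M * Real.log q := by
    refine brun_aux hq M _ fun p hp => ?_
    simp only [Finset.mem_filter, Nat.mem_primesLE] at hp
    refine ⟨hp.1.2, hp.2.2, (p - 1) / q, ?_, ?_⟩
    · have : (p - 1) / q ≤ (N - 1) / q := Nat.div_le_div_right (by omega)
      omega
    · rw [Nat.mul_div_cancel' hp.2.1]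
      have := hp.1.2.pos
      omega
  have h3 : ∑ p ∈ Nat.primesLE M, Real.log p ≤ Real.log 4 * M := by
    have := Chebyshev.theta_le_log4_mul_x (x := M) (Nat.cast_nonneg M)
    rwa [Chebyshev.theta_eq_sum_primesLE_log] at this
  have h4 : Real.log 4 = 2 * Real.log 2 := by
    rw [show (4:ℝ) = 2 ^ 2 by norm_num, Real.log_pow]; norm_num
  calc _ ≤ 2 * M * Real.log q + Real.log 4 * M := by linarith
    _ ≤ 4 * Real.log q * M := by rw [h4]; nlinarith [Nat.cast_nonneg (α := ℝ) M]
    _ ≤ 4 * Real.log q * (2 * N / q) := by gcongr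
    _ = _ := by ring

/-- tail function -/
lemma log_sq_summable : Summable fun n : ℕ => Real.log n / (n:ℝ) ^ 2 := by
  have h : Summable fun n : ℕ => 2 * (1 / (n:ℝ) ^ (3/2:ℝ)) :=
    ((Real.summable_one_div_nat_rpow).2 (by norm_num)).mul_left 2
  refine Summable.of_nonneg_of_le (fun n => by have := Real.log_natCast_nonneg n; positivity) (fun n => ?_) h
  rcases Nat.eq_zero_or_pos n with rfl | hn
  · simp
  have hn' : (0:ℝ) < n := by exact_mod_cast hn
  have h1 := Real.log_le_rpow_div hn'.le (ε := 1/2) (by norm_num)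
  have h2 : (n:ℝ) ^ 2 = (n:ℝ) ^ (1/2:ℝ) * (n:ℝ) ^ (3/2:ℝ) := by
    rw [← Real.rpow_add hn', ← Real.rpow_natCast]; norm_num
  have h3 : (0:ℝ) < (n:ℝ) ^ (1/2:ℝ) := Real.rpow_pos_of_pos hn' _
  have h4 : (0:ℝ) < (n:ℝ) ^ (3/2:ℝ) := Real.rpow_pos_of_pos hn' _
  rw [h2, div_le_iff₀ (by positivity)]
  calc _ ≤ _ := h1
    _ = _ := by field_simp

/-- Weighted tail bound: for any `ε`, for all large `Y`, for all `N`. -/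
lemma brun_tail {ε : ℝ} (hε : 0 < ε) : ∃ Y₀ : ℕ, ∀ Y ≥ Y₀, ∀ N : ℕ,
    ∑ p ∈ Nat.primesLE N, (∑ q ∈ (p - 1).primeFactors with Y < q, (1 / q : ℝ)) * Real.log p ≤ ε * N := by
  have ht := (Summable.tendsto_sum_tsum_nat log_sq_summable)
  obtain ⟨s, hs⟩ := (summable_iff_vanishing_norm.1 log_sq_summable) (ε / 8) (by positivity)
  refine ⟨s.sup id, fun Y hY N => ?_⟩
  have hswap : ∑ p ∈ Nat.primesLE N, (∑ q ∈ (p - 1).primeFactors with Y < q, (1 / q : ℝ)) * Real.log p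
      = ∑ q ∈ (Nat.primesLE N).filter (fun q => Y < q), (1 / q : ℝ) * ∑ p ∈ Nat.primesLE N with q ∣ p - 1, Real.log p := by
    simp_rw [Finset.sum_mul, Finset.mul_sum]
    refine Finset.sum_comm' ?_
    intro p q
    simp only [Finset.mem_filter, Nat.mem_primesLE, Nat.mem_primeFactors]
    constructor
    · rintro ⟨⟨h1, h2⟩, ⟨h3, h4, h5⟩, h6⟩
      have := Nat.le_of_dvd (by omega) h4
      exact ⟨⟨⟨h1, h2⟩, h4⟩, ⟨by omega, h3⟩, h6⟩
    · rintro ⟨⟨⟨h1, h2⟩, h4⟩, ⟨h7, h3⟩, h6⟩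
      have := h2.two_le
      exact ⟨⟨h1, h2⟩, ⟨h3, h4, by omega⟩, h6⟩
  rw [hswap]
  have hd : Disjoint ((Nat.primesLE N).filter (fun q => Y < q)) s := by
    rw [Finset.disjoint_left]
    intro q hq hqs
    have : q ≤ s.sup id := Finset.le_sup (f := id) hqs
    have := (Finset.mem_filter.1 hq).2
    omega
  have h1 := hs _ hd
  calc _ ≤ ∑ q ∈ (Nat.primesLE N).filter (fun q => Y < q), 8 * N * (Real.log q / (q:ℝ) ^ 2) := by
        refine Finset.sum_le_sum fun q hq => ?_
        have hqp : q.Prime := (Nat.mem_primesLE.1 (Finset.mem_filter.1 hq).1).2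
        have hqpos : (0:ℝ) < q := by exact_mod_cast hqp.pos
        calc _ ≤ (1 / q : ℝ) * (8 * N * (Real.log q / q)) := by gcongr; exact brun hqp N
          _ = _ := by field_simp
    _ = 8 * N * ∑ q ∈ (Nat.primesLE N).filter (fun q => Y < q), (Real.log q / (q:ℝ) ^ 2) := by rw [Finset.mul_sum]
    _ ≤ 8 * N * (ε / 8) := by gcongr; exact (le_abs_self _).trans h1.le
    _ = _ := by ring
end PartD

section PartE
open Filter Topology

/-- `f` is periodic mod `n` with mean value `c` over the reduced residues. -/
def PM (n : ℕ) (f : ℕ → ℝ) (c : ℝ) : Prop :=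
  ∃ _ : NeZero n, ∃ F : ZMod n → ℝ, (∀ p : ℕ, f p = F p) ∧ ∑ a : (ZMod n)ˣ, F a = c * n.totient

lemma PM.mul {n m : ℕ} {f f' : ℕ → ℝ} {c c' : ℝ} (h : PM n f c) (h' : PM m f' c') (hc : n.Coprime m) :
    PM (n * m) (fun p => f p * f' p) (c * c') := by
  obtain ⟨i, F, hF, hs⟩ := h
  obtain ⟨i', F', hF', hs'⟩ := h'
  refine ⟨⟨Nat.mul_ne_zero i.out i'.out⟩, fun x => F (ZMod.chineseRemainder hc x).1 * F' (ZMod.chineseRemainder hc x).2, ?_, ?_⟩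
  · intro p
    simp only [map_natCast, hF, hF']
    rfl
  · have e : (ZMod (n * m))ˣ ≃* (ZMod n)ˣ × (ZMod m)ˣ :=
      (Units.mapEquiv (ZMod.chineseRemainder hc).toMulEquiv).trans MulEquiv.prodUnits
    rw [Nat.totient_mul hc]
    push_cast
    rw [mul_mul_mul_comm, ← hs, ← hs', Finset.sum_mul_sum, ← Fintype.sum_prod_type']
    refine Fintype.sum_equiv ((Units.mapEquiv (ZMod.chineseRemainder hc).toMulEquiv).trans MulEquiv.prodUnits).toEquiv _ _ fun u => ?_
    rfl

lemma PM.one : PM 1 (fun _ => 1) 1 := by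
  refine ⟨inferInstance, fun _ => 1, fun _ => rfl, ?_⟩
  simp

lemma PM.prod (T : Finset ℕ) (hT : ∀ q ∈ T, q.Prime) (f : ℕ → ℕ → ℝ) (c : ℕ → ℝ) (h : ∀ q ∈ T, PM q (f q) (c q)) :
    PM (∏ q ∈ T, q) (fun p => ∏ q ∈ T, f q p) (∏ q ∈ T, c q) := by
  induction T using Finset.induction_on with
  | empty => simpa using PM.one
  | insert a s ha ih =>
    simp only [Finset.prod_insert ha]
    refine PM.mul (h a (Finset.mem_insert_self _ _)) (ih (fun q hq => hT q (Finset.mem_insert_of_mem hq)) fun q hq => h q (Finset.mem_insert_of_mem hq)) ?_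
    refine Nat.Coprime.prod_right fun q hq => ?_
    rw [Nat.coprime_primes (hT a (Finset.mem_insert_self _ _)) (hT q (Finset.mem_insert_of_mem hq))]
    rintro rfl
    exact ha hq

lemma PM.tendsto {n : ℕ} {f : ℕ → ℝ} {c : ℝ} (h : PM n f c) :
    Tendsto (fun N : ℕ => (∑ p ∈ Nat.primesLE N, f p * Real.log p) / N) atTop (𝓝 c) := by
  obtain ⟨i, F, hF, hs⟩ := h
  classical
  let r : ℕ → ℝ := fun p => if IsUnit (p : ZMod n) then 0 else F p
  have hdec : ∀ p : ℕ, f p = (∑ u : (ZMod n)ˣ, F u * (if (p : ZMod n) = u then 1 else 0)) + r p := by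
    intro p
    rw [hF]
    by_cases hp : IsUnit (p : ZMod n)
    · obtain ⟨u, hu⟩ := hp
      simp only [r, ← hu, Units.isUnit, if_true, add_zero]
      rw [Finset.sum_eq_single u]
      · simp
      · intro v _ hv
        have : ¬ ((u : ZMod n) = v) := fun h => hv (Units.ext h.symm)
        simp [this]
      · simp
    · simp only [r, hp, if_false]
      rw [Finset.sum_eq_zero, zero_add]
      intro u _
      have : ¬ ((p : ZMod n) = u) := fun h => hp (h ▸ u.isUnit)
      simp [this]
  have h1 : Tendsto (fun N : ℕ => ∑ u : (ZMod n)ˣ, F u * ((∑ p ∈ Nat.primesLE N, (if (p : ZMod n) = u then 1 else 0) * Real.log p) / N)) atTop (𝓝 (∑ u : (ZMod n)ˣ, F u * (n.totient : ℝ)⁻¹)) :=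
    tendsto_finsetSum _ fun u _ => (thetaAP_tendsto u.isUnit).const_mul _
  have h2 : Tendsto (fun N : ℕ => (∑ p ∈ Nat.primesLE N, r p * Real.log p) / N) atTop (𝓝 0) := by
    have h3 : Tendsto (fun N : ℕ => (∑ p ∈ Nat.primesLE n, r p * Real.log p) / (N:ℝ)) atTop (𝓝 0) :=
      tendsto_const_nhds.div_atTop tendsto_natCast_atTop_atTop
    refine h3.congr' ?_
    filter_upwards [eventually_ge_atTop n] with N hN
    congr 1
    refine Finset.sum_subset ?_ ?_
    · intro p hp
      rw [Nat.mem_primesLE] at hp ⊢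
      exact ⟨hp.1.trans hN, hp.2⟩
    · intro p hp hp'
      rw [Nat.mem_primesLE] at hp hp'
      have hpn : n < p := by
        by_contra hh
        exact hp' ⟨not_lt.1 hh, hp.2⟩
      have : IsUnit (p : ZMod n) := by
        rw [ZMod.isUnit_iff_coprime, hp.2.coprime_iff_not_dvd]
        intro hd
        have := Nat.le_of_dvd (Nat.pos_of_ne_zero i.out) hd
        omega
      simp [r, this]
  have h4 := h1.add h2
  have h5 : ∑ u : (ZMod n)ˣ, F u * (n.totient : ℝ)⁻¹ + 0 = c := by
    rw [← Finset.sum_mul, hs, add_zero, mul_inv_cancel_right₀]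
    exact_mod_cast (Nat.totient_pos.2 (Nat.pos_of_ne_zero i.out)).ne'
  rw [h5] at h4
  refine h4.congr fun N => ?_
  simp_rw [← mul_div_assoc]
  rw [← Finset.sum_div, ← add_div]
  congr 1
  simp_rw [Finset.mul_sum]
  rw [Finset.sum_comm, ← Finset.sum_add_distrib]
  refine Finset.sum_congr rfl fun p _ => ?_
  rw [hdec p, add_mul, Finset.sum_mul]
  congr 1
  exact Finset.sum_congr rfl fun u _ => by ring

/-- local factor -/
lemma PM.local1 {q : ℕ} (hq : q.Prime) (c : ℝ) :
    PM q (fun p => 1 - c * (if (p : ZMod q) = 1 then 1 else 0)) (1 - c / (q - 1)) := by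
  have := Fact.mk hq
  refine ⟨inferInstance, fun x => 1 - c * (if x = 1 then 1 else 0), fun p => rfl, ?_⟩
  have h1 : (1:ℝ) < q := by exact_mod_cast hq.one_lt
  rw [Finset.sum_sub_distrib, ← Finset.mul_sum]
  simp only [Units.val_eq_one, Finset.sum_ite_eq', Finset.mem_univ, if_true, Finset.sum_const, Finset.card_univ, ZMod.card_units_eq_totient, Nat.totient_prime hq, nsmul_eq_mul]
  rw [Nat.cast_sub hq.one_le]
  push_cast
  have : (q:ℝ) - 1 ≠ 0 := by linarith
  field_simp

lemma PM.local2 {q : ℕ} (hq : q.Prime) (hq2 : q ≠ 2) (c : ℝ) :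
    PM q (fun p => (1 - c * (if (p : ZMod q) = 1 then 1 else 0)) * (jacobiSym p q : ℝ)) (- c / (q - 1)) := by
  have := Fact.mk hq
  refine ⟨inferInstance, fun x => (1 - c * (if x = 1 then 1 else 0)) * (quadraticChar (ZMod q) x : ℝ), fun p => ?_, ?_⟩
  · simp only
    rw [← jacobiSym.legendreSym.to_jacobiSym, legendreSym]
    simp
  have h1 : (1:ℝ) < q := by exact_mod_cast hq.one_lt
  have hz : ∑ a : (ZMod q)ˣ, (quadraticChar (ZMod q) a : ℝ) = 0 := by
    have h2 := quadraticChar_sum_zero (F := ZMod q) (by rwa [ZMod.ringChar_zmod_n])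
    have h3 : ∑ a : (ZMod q)ˣ, quadraticChar (ZMod q) a = ∑ a : ZMod q, quadraticChar (ZMod q) a := by
      refine Finset.sum_of_injOn (fun u : (ZMod q)ˣ => (u : ZMod q)) ?_ ?_ ?_ ?_
      · exact fun a _ b _ hab => Units.ext hab
      · intro a _; simp
      · intro x _ hx
        refine MulChar.map_nonunit _ fun hu => hx ?_
        obtain ⟨u, rfl⟩ := hu
        exact ⟨u, by simp, rfl⟩
      · intro a _; rfl
    rw [← h3] at h2
    exact_mod_cast h2
  simp_rw [sub_mul, one_mul]
  rw [Finset.sum_sub_distrib, hz, Finset.sum_eq_single (1 : (ZMod q)ˣ)]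
  · simp only [Units.val_one, if_true, map_one, Nat.totient_prime hq]
    rw [Nat.cast_sub hq.one_le]
    push_cast
    have : (q:ℝ) - 1 ≠ 0 := by linarith
    field_simp
    simp
  · intro b _ hb
    simp [hb]
  · simp

/-- factor at 8 -/
lemma PM.eight (b e : Bool) : 
    PM 8 (fun p => (((if b then ZMod.χ₄ (p : ZMod 4) else 1) * (if e then ZMod.χ₈ (p : ZMod 8) else 1) : ℤ) : ℝ))
      (if b || e then 0 else 1) := by
  refine ⟨inferInstance, fun x => (((if b then ZMod.χ₄ (ZMod.cast x) else 1) * (if e then ZMod.χ₈ x else 1) : ℤ) : ℝ), fun p => ?_, ?_⟩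
  · simp only
    rw [ZMod.cast_natCast (by norm_num)]
  · have h : ∀ b e : Bool, ∑ x : (ZMod 8)ˣ, ((if b then ZMod.χ₄ (ZMod.cast (x : ZMod 8)) else 1) * (if e then ZMod.χ₈ (x : ZMod 8) else 1) : ℤ) = if b || e then 0 else 4 := by
      decide
    have ht : Nat.totient 8 = 4 := by decide
    rw [ht, ← Int.cast_sum, h]
    split_ifs <;> simp
end PartE

section PartF
open Filter Topology

lemma jacobi_prod_right (a : ℤ) (T : Finset ℕ) (hT : ∀ q ∈ T, q ≠ 0) :
    jacobiSym a (∏ q ∈ T, q) = ∏ q ∈ T, jacobiSym a q := by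
  induction T using Finset.induction_on with
  | empty => simp
  | insert x s hx ih =>
    rw [Finset.prod_insert hx, Finset.prod_insert hx, ← ih fun q hq => hT q (Finset.mem_insert_of_mem hq)]
    refine jacobiSym.mul_right' a (hT x (Finset.mem_insert_self _ _)) ?_
    exact Finset.prod_ne_zero_iff.2 fun q hq => hT q (Finset.mem_insert_of_mem hq)

lemma jacobi_recip (m p : ℕ) (hm : Odd m) (hp : Odd p) :
    jacobiSym m p = (if m % 4 = 3 then ZMod.χ₄ (p : ZMod 4) else 1) * jacobiSym p m := by
  have h1 : m % 4 = 1 ∨ m % 4 = 3 := by rcases hm with ⟨k, rfl⟩; omega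
  have h2 : p % 4 = 1 ∨ p % 4 = 3 := by rcases hp with ⟨k, rfl⟩; omega
  rcases h1 with h1 | h1
  · rw [if_neg (by omega), one_mul, jacobiSym.quadratic_reciprocity_one_mod_four h1 hp]
  · rw [if_pos h1]
    rcases h2 with h2 | h2
    · rw [ZMod.χ₄_nat_one_mod_four h2, one_mul, jacobiSym.quadratic_reciprocity_one_mod_four h2 hm]
    · rw [ZMod.χ₄_nat_three_mod_four h2, jacobiSym.quadratic_reciprocity_three_mod_four h1 h2]
      ring

lemma recip (g : ℤ) (hg : Squarefree g) : ∃ b e : Bool, ((b || e) = false ↔ g % 4 = 1) ∧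
    ∀ p : ℕ, Odd p → jacobiSym g p = (if b then ZMod.χ₄ (p : ZMod 4) else 1) * (if e then ZMod.χ₈ (p : ZMod 8) else 1) *
      ∏ q ∈ g.natAbs.primeFactors.filter (fun q => q ≠ 2), jacobiSym p q := by
  set T := g.natAbs.primeFactors.filter (fun q => q ≠ 2) with hT
  set m := ∏ q ∈ T, q with hm
  have hTp : ∀ q ∈ T, q.Prime := fun q hq => Nat.prime_of_mem_primeFactors (Finset.mem_filter.1 hq).1
  have hmodd : Odd m := by
    rw [hm]
    refine Finset.prod_induction _ Odd (fun a b ha hb => ha.mul hb) odd_one fun q hq => ?_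
    exact (hTp q hq).odd_of_ne_two (Finset.mem_filter.1 hq).2
  have habs : (g.natAbs : ℤ) = (if 2 ∣ g.natAbs then 2 else 1) * m := by
    have h1 := Nat.prod_primeFactors_of_squarefree (Int.squarefree_natAbs.2 hg)
    have h0 : g.natAbs ≠ 0 := Int.natAbs_ne_zero.2 hg.ne_zero
    have h2 := Finset.prod_filter_mul_prod_filter_not g.natAbs.primeFactors (fun q => q ≠ 2) (fun q => q)
    rw [h1, ← hT, ← hm] at h2
    have h3 : ∏ q ∈ g.natAbs.primeFactors.filter (fun q => ¬ q ≠ 2), q = if 2 ∣ g.natAbs then 2 else 1 := by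
      simp only [not_not, Finset.filter_eq']
      split_ifs with h4 h5 h5
      · simp
      · exact absurd (Nat.dvd_of_mem_primeFactors h4) h5
      · exact absurd (Nat.mem_primeFactors.2 ⟨Nat.prime_two, h5, h0⟩) h4
      · simp
    rw [h3] at h2
    have h5 : ((m * if 2 ∣ g.natAbs then 2 else 1 : ℕ) : ℤ) = g.natAbs := by exact_mod_cast h2
    rw [← h5, Nat.cast_mul, mul_comm]
    split_ifs <;> simp
  have hm4 : m % 4 = 1 ∨ m % 4 = 3 := by rcases hmodd with ⟨k, hk⟩; omega
  refine ⟨xor (decide (g < 0)) (decide (m % 4 = 3)), decide (2 ∣ g.natAbs), ?_, ?_⟩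
  · by_cases h2 : 2 ∣ g.natAbs
    · simp [h2]; omega
    · simp only [h2, if_false] at habs
      by_cases hn : g < 0 <;> rcases hm4 with h | h <;> simp [h2, hn, h] <;> omega
  · intro p hp
    have h1 : jacobiSym g p = jacobiSym (if g < 0 then -1 else 1) p * (jacobiSym (if 2 ∣ g.natAbs then 2 else 1) p * jacobiSym m p) := by
      rw [← jacobiSym.mul_left, ← jacobiSym.mul_left, ← habs]
      congr 1
      split_ifs <;> omega
    rw [← jacobi_prod_right _ _ (fun q hq => (hTp q hq).ne_zero), h1, jacobi_recip m p hmodd hp]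
    have hneg := jacobiSym.at_neg_one hp
    have htwo := jacobiSym.at_two hp
    have hsq : ZMod.χ₄ (p : ZMod 4) * ZMod.χ₄ (p : ZMod 4) = 1 := by
      have h2 : p % 4 = 1 ∨ p % 4 = 3 := by rcases hp with ⟨k, rfl⟩; omega
      rcases h2 with h2 | h2
      · rw [ZMod.χ₄_nat_one_mod_four h2]; rfl
      · rw [ZMod.χ₄_nat_three_mod_four h2]; rfl
    rw [← hm]
    generalize ZMod.χ₄ (p : ZMod 4) = x at *
    generalize ZMod.χ₈ (p : ZMod 8) = y at *
    generalize jacobiSym p m = z at *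
    by_cases hn : g < 0 <;> by_cases h2 : 2 ∣ g.natAbs <;> rcases hm4 with h | h <;>
      simp only [h2, hn, h, hneg, htwo, if_true, if_false, decide_true, decide_false, Bool.xor_true, Bool.xor_false, Bool.not_true, Bool.not_false, Bool.false_eq_true, jacobiSym.one_left, show ¬ ((1:ℕ) = 3) by norm_num] <;>
      first | ring1 | linear_combination (y * z) * hsq | linear_combination z * hsq
end PartF

section PartH
open Filter Topology

lemma unweight {f : ℕ → ℝ} {C A : ℝ} (hf0 : ∀ p, p.Prime → 0 ≤ f p) (hfC : ∀ p, p.Prime → f p ≤ C) (hC : 0 ≤ C)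
    (h : Tendsto (fun N : ℕ => (∑ p ∈ Nat.primesLE N, f p * Real.log p) / N) atTop (𝓝 A)) :
    Tendsto (fun N : ℕ => (∑ p ∈ Nat.primesLE N, f p) * Real.log N / N) atTop (𝓝 A) := by
  have hlog : Tendsto (fun N : ℕ => Real.log N) atTop atTop := Real.tendsto_log_atTop.comp tendsto_natCast_atTop_atTop
  have h0 : Tendsto (fun N : ℕ => Real.log (Real.log N) / Real.log N) atTop (𝓝 0) := by
    have := Real.isLittleO_log_id_atTop.tendsto_div_nhds_zero
    exact this.comp hlog
  have h1 : Tendsto (fun N : ℕ => (1 - 2 * (Real.log (Real.log N) / Real.log N))⁻¹) atTop (𝓝 1) := by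
    have := ((h0.const_mul 2).const_sub 1).inv₀ (by norm_num)
    simpa using this
  have h2 : Tendsto (fun N : ℕ => C / Real.log N) atTop (𝓝 0) := hlog.const_div_atTop C
  have h3 := h2.add (h.mul h1)
  rw [mul_one, zero_add] at h3
  have hev : ∀ᶠ N : ℕ in atTop, 2 * (Real.log (Real.log N) / Real.log N) < 1 := by
    have := (h0.const_mul 2)
    rw [mul_zero] at this
    exact this.eventually (gt_mem_nhds zero_lt_one)
  refine tendsto_of_tendsto_of_tendsto_of_le_of_le' h h3 ?_ ?_
  · filter_upwards [eventually_gt_atTop 0] with N hN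
    have hN' : (0:ℝ) < N := by exact_mod_cast hN
    gcongr
    rw [Finset.sum_mul]
    refine Finset.sum_le_sum fun p hp => ?_
    rw [Nat.mem_primesLE] at hp
    have := hf0 p hp.2
    have hpp : (0:ℝ) < p := by exact_mod_cast hp.2.pos
    gcongr
    exact hp.1
  · filter_upwards [eventually_gt_atTop 0, hev, hlog.eventually_gt_atTop 0] with N hN hN2 hL
    have hN' : (0:ℝ) < N := by exact_mod_cast hN
    set L := Real.log N with hLdef
    set y : ℝ := N / L ^ 2 with hy
    have hy0 : 0 < y := by positivity
    have hlogy : Real.log y = L - 2 * Real.log L := by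
      rw [hy, Real.log_div hN'.ne' (by positivity), Real.log_pow]; norm_num [hLdef]
    have hlogy0 : 0 < Real.log y := by
      rw [← mul_div_assoc, div_lt_one hL] at hN2
      rw [hlogy]; linarith
    set S := ∑ p ∈ Nat.primesLE N, f p with hS
    set T := ∑ p ∈ Nat.primesLE N, f p * Real.log p with hT
    have hmain : (S - C * y) * Real.log y ≤ T := by
      have e1 : S - C * y ≤ ∑ p ∈ (Nat.primesLE N).filter (fun p : ℕ => y < (p:ℝ)), f p := by
        rw [hS, ← Finset.sum_filter_add_sum_filter_not (Nat.primesLE N) (fun p : ℕ => y < (p:ℝ))]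
        have : ∑ p ∈ (Nat.primesLE N).filter (fun p : ℕ => ¬ y < (p:ℝ)), f p ≤ C * y := by
          calc _ ≤ ((Nat.primesLE N).filter (fun p : ℕ => ¬ y < (p:ℝ))).card • C := by
                refine Finset.sum_le_card_nsmul _ _ _ fun p hp => ?_
                exact hfC p (Nat.mem_primesLE.1 (Finset.mem_filter.1 hp).1).2
            _ ≤ (⌊y⌋₊ : ℕ) • C := by
                gcongr
                rw [← Nat.add_sub_cancel (n := ⌊y⌋₊) (m := 1), ← Nat.card_Icc]
                refine Finset.card_le_card fun p hp => ?_
                simp only [Finset.mem_filter, not_lt, Nat.mem_primesLE] at hp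
                exact Finset.mem_Icc.2 ⟨hp.1.2.pos, Nat.le_floor hp.2⟩
            _ ≤ C * y := by
                rw [nsmul_eq_mul, mul_comm]
                gcongr
                exact Nat.floor_le hy0.le
        linarith
      calc _ ≤ (∑ p ∈ (Nat.primesLE N).filter (fun p : ℕ => y < (p:ℝ)), f p) * Real.log y := by gcongr
        _ ≤ ∑ p ∈ (Nat.primesLE N).filter (fun p : ℕ => y < (p:ℝ)), f p * Real.log p := by
            rw [Finset.sum_mul]
            refine Finset.sum_le_sum fun p hp => ?_
            simp only [Finset.mem_filter, Nat.mem_primesLE] at hp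
            have := hf0 p hp.1.2
            gcongr
            exact hp.2.le
        _ ≤ T := by
            refine Finset.sum_le_sum_of_subset_of_nonneg (Finset.filter_subset _ _) fun p hp _ => ?_
            exact mul_nonneg (hf0 p (Nat.mem_primesLE.1 hp).2) (Real.log_natCast_nonneg p)
    have e2 : 1 - 2 * (Real.log L / L) = Real.log y / L := by rw [hlogy]; field_simp
    rw [e2, inv_div]
    have e3 : S ≤ C * y + T / Real.log y := by
      rw [← sub_le_iff_le_add', le_div_iff₀ hlogy0]; exact hmain
    calc S * L / N ≤ (C * y + T / Real.log y) * L / N := by gcongr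
      _ = _ := by rw [hy]; field_simp

lemma nth_prime_strictMono : StrictMono (Nat.nth Nat.Prime) :=
  Nat.nth_strictMono Nat.infinite_setOfPred_prime

lemma sum_nth (f : ℕ → ℝ) (N : ℕ) :
    ∑ i ∈ Finset.range N, f (Nat.nth Nat.Prime i) = ∑ p ∈ Nat.primesLE (Nat.nth Nat.Prime N - 1), f p := by
  refine Finset.sum_bij (fun i _ => Nat.nth Nat.Prime i) ?_ ?_ ?_ ?_
  · intro i hi
    have h1 := nth_prime_strictMono (Finset.mem_range.1 hi)
    rw [Nat.mem_primesLE]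
    exact ⟨by omega, Nat.prime_nth_prime i⟩
  · intro i _ j _ hij
    exact (nth_prime_strictMono).injective hij
  · intro p hp
    rw [Nat.mem_primesLE] at hp
    refine ⟨Nat.count Nat.Prime p, ?_, Nat.nth_count hp.2⟩
    have := hp.2.two_le
    rw [Finset.mem_range, ← nth_prime_strictMono.lt_iff_lt, Nat.nth_count hp.2]
    omega
  · intro i _; rfl

lemma final_avg {f : ℕ → ℝ} {C A : ℝ} (hf0 : ∀ p, p.Prime → 0 ≤ f p) (hfC : ∀ p, p.Prime → f p ≤ C) (hC : 0 ≤ C)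
    (h : Tendsto (fun N : ℕ => (∑ p ∈ Nat.primesLE N, f p * Real.log p) / N) atTop (𝓝 A)) :
    Tendsto (fun N : ℕ => (1 / (N : ℝ)) * ∑ i ∈ Finset.range N, f (Nat.nth Nat.Prime i)) atTop (𝓝 A) := by
  have h1 := unweight hf0 hfC hC h
  have h2 := unweight (f := fun _ => 1) (fun _ _ => zero_le_one) (fun _ _ => le_rfl) zero_le_one PM.one.tendsto
  have h3 := h1.div h2 one_ne_zero
  rw [div_one] at h3
  have hnth : Tendsto (fun N => Nat.nth Nat.Prime N - 1) atTop atTop :=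
    (tendsto_sub_atTop_nat 1).comp (nth_prime_strictMono).tendsto_atTop
  refine (h3.comp hnth).congr' ?_
  filter_upwards [hnth.eventually_gt_atTop 1] with N hN
  have hN' : (1:ℝ) < ((Nat.nth Nat.Prime N - 1 : ℕ) : ℝ) := by exact_mod_cast hN
  have hL := Real.log_pos hN'
  have e := sum_nth (fun _ => 1) N
  simp only [Finset.sum_const, Finset.card_range, nsmul_eq_mul, mul_one] at e
  simp only [Function.comp, Pi.div_apply]
  rw [sum_nth]
  simp only [Finset.sum_const, nsmul_eq_mul, mul_one]
  rw [← e]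
  have : (0:ℝ) < ((Nat.nth Nat.Prime N - 1 : ℕ) : ℝ) := by linarith
  rw [mul_div_assoc, mul_div_assoc (N:ℝ), mul_div_mul_right _ _ (by positivity)]
  ring
end PartH

section PartG1
open Filter Topology

lemma mean_approx (f t : ℕ → ℕ → ℝ) (L : ℕ → ℝ) (φ : ℕ → ℝ) (A : ℝ) (P Y₁ : ℕ)
    (hf : ∀ Y ≥ Y₁, Tendsto (fun N : ℕ => (∑ p ∈ Nat.primesLE N, f Y p * Real.log p) / N) atTop (𝓝 (L Y)))
    (hL : Tendsto L atTop (𝓝 A))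
    (hfφ : ∀ Y ≥ Y₁, ∀ p, p.Prime → P < p → |f Y p - φ p| ≤ t Y p)
    (htnn : ∀ Y p, 0 ≤ t Y p)
    (ht : ∀ ε > 0, ∃ Y₀ : ℕ, ∀ Y ≥ Y₀, ∀ N : ℕ, ∑ p ∈ Nat.primesLE N, t Y p * Real.log p ≤ ε * N) :
    Tendsto (fun N : ℕ => (∑ p ∈ Nat.primesLE N, φ p * Real.log p) / N) atTop (𝓝 A) := by
  rw [Metric.tendsto_atTop]
  intro ε hε
  obtain ⟨Y₀, hY₀⟩ := ht (ε / 4) (by positivity)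
  have hL' := (Metric.tendsto_atTop.1 hL) (ε / 4) (by positivity)
  obtain ⟨Y₂, hY₂⟩ := hL'
  set Y := max (max Y₀ Y₁) Y₂ with hY
  have hYa := hY₀ Y (by omega)
  have hYb := hY₂ Y (by omega)
  have hYc := hfφ Y (by omega)
  obtain ⟨N₁, hN₁⟩ := (Metric.tendsto_atTop.1 (hf Y (by omega))) (ε / 4) (by positivity)
  set K := ∑ p ∈ Nat.primesLE P, |f Y p - φ p| * Real.log p with hK
  have hK0 : Tendsto (fun N : ℕ => K / (N:ℝ)) atTop (𝓝 0) := tendsto_const_nhds.div_atTop tendsto_natCast_atTop_atTop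
  obtain ⟨N₂, hN₂⟩ := (Metric.tendsto_atTop.1 hK0) (ε / 4) (by positivity)
  refine ⟨max (max N₁ N₂) 1, fun N hN => ?_⟩
  have h1 := hN₁ N (by omega)
  have h2 := hN₂ N (by omega)
  have hN0 : (0:ℝ) < N := by exact_mod_cast (show 0 < N by omega)
  have h3 : |(∑ p ∈ Nat.primesLE N, f Y p * Real.log p) - (∑ p ∈ Nat.primesLE N, φ p * Real.log p)| ≤ K + ε / 4 * N := by
    rw [← Finset.sum_sub_distrib]
    calc _ ≤ ∑ p ∈ Nat.primesLE N, |f Y p * Real.log p - φ p * Real.log p| := Finset.abs_sum_le_sum_abs _ _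
      _ = ∑ p ∈ Nat.primesLE N, |f Y p - φ p| * Real.log p := by
          refine Finset.sum_congr rfl fun p _ => ?_
          rw [← sub_mul, abs_mul, abs_of_nonneg (Real.log_natCast_nonneg p)]
      _ ≤ ∑ p ∈ Nat.primesLE N, ((if p ≤ P then |f Y p - φ p| * Real.log p else 0) + t Y p * Real.log p) := by
          refine Finset.sum_le_sum fun p hp => ?_
          have hl := Real.log_natCast_nonneg p
          have := mul_nonneg (htnn Y p) hl
          split_ifs with hpP
          · linarith
          · rw [zero_add]
            gcongr
            exact hYc p (Nat.mem_primesLE.1 hp).2 (not_le.1 hpP)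
      _ = (∑ p ∈ (Nat.primesLE N).filter (fun p => p ≤ P), |f Y p - φ p| * Real.log p) + ∑ p ∈ Nat.primesLE N, t Y p * Real.log p := by
          rw [Finset.sum_add_distrib, Finset.sum_filter]
      _ ≤ _ := by
          refine add_le_add ?_ (hYa N)
          refine Finset.sum_le_sum_of_subset_of_nonneg ?_ fun p _ _ => mul_nonneg (abs_nonneg _) (Real.log_natCast_nonneg p)
          intro p hp
          simp only [Finset.mem_filter, Nat.mem_primesLE] at hp ⊢
          exact ⟨hp.2, hp.1.2⟩
  have h4 : |(∑ p ∈ Nat.primesLE N, f Y p * Real.log p) / N - (∑ p ∈ Nat.primesLE N, φ p * Real.log p) / N| ≤ K / N + ε / 4 := by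
    rw [← sub_div, abs_div, abs_of_pos hN0, div_le_iff₀ hN0]
    calc _ ≤ _ := h3
      _ = _ := by field_simp
  rw [Real.dist_eq] at *
  rw [sub_zero] at h2
  rw [abs_lt] at *
  rw [abs_le] at h4
  constructor <;> linarith [h1.1, h1.2, h2.1, h2.2, h4.1, h4.2, hYb.1, hYb.2]

noncomputable def cq (h q : ℕ) : ℝ := if q ∣ h then 1 else 1 / q

lemma cq_nonneg (h q : ℕ) : 0 ≤ cq h q := by unfold cq; split_ifs <;> positivity
lemma cq_le_one (h q : ℕ) : cq h q ≤ 1 := by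
  unfold cq
  split_ifs
  · rfl
  · rcases Nat.eq_zero_or_pos q with rfl | hq
    · simp
    · rw [div_le_one (by exact_mod_cast hq)]; exact_mod_cast hq

lemma one_sub_sum_le (s : Finset ℕ) (x : ℕ → ℝ) (h0 : ∀ q ∈ s, 0 ≤ x q) (h1 : ∀ q ∈ s, x q ≤ 1) :
    1 - ∑ q ∈ s, x q ≤ ∏ q ∈ s, (1 - x q) := by
  induction s using Finset.induction_on with
  | empty => simp
  | insert a s ha ih =>
    rw [Finset.sum_insert ha, Finset.prod_insert ha]
    have i1 := ih (fun q hq => h0 q (Finset.mem_insert_of_mem hq)) (fun q hq => h1 q (Finset.mem_insert_of_mem hq))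
    have i2 := h0 a (Finset.mem_insert_self _ _)
    have i3 := h1 a (Finset.mem_insert_self _ _)
    have i4 : ∏ q ∈ s, (1 - x q) ≤ 1 := Finset.prod_le_one (fun q hq => sub_nonneg.2 (h1 q (Finset.mem_insert_of_mem hq)))
      (fun q hq => by linarith [h0 q (Finset.mem_insert_of_mem hq)])
    nlinarith

lemma totient_part {n h : ℕ} (hn : n ≠ 0) (h2 : 2 ∣ n) (hh : Odd h) :
    (if Nat.gcd n h = 1 then 2 * (n.totient : ℝ) / n else 0) =
      ∏ q ∈ n.primeFactors.filter (fun q => q ≠ 2), (1 - cq h q) := by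
  split_ifs with hg
  · have h1 : (n.totient : ℝ) = n * ∏ q ∈ n.primeFactors, (1 - (q:ℝ)⁻¹) := by
      have := Nat.totient_eq_mul_prod_factors n
      have h7 := congrArg (fun x : ℚ => (x : ℝ)) this
      push_cast at h7
      exact h7
    have hn' : (n:ℝ) ≠ 0 := by exact_mod_cast hn
    have h3 : (2 * (n.totient : ℝ) / n) = 2 * ∏ q ∈ n.primeFactors, (1 - (q:ℝ)⁻¹) := by
      rw [h1]; field_simp
    rw [h3, ← Finset.prod_filter_mul_prod_filter_not n.primeFactors (fun q => q ≠ 2)]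
    have h4 : n.primeFactors.filter (fun q => ¬ q ≠ 2) = {2} := by
      simp only [not_not, Finset.filter_eq']
      rw [if_pos (Nat.mem_primeFactors.2 ⟨Nat.prime_two, h2, hn⟩)]
    rw [h4, Finset.prod_singleton]
    have h5 : ∏ q ∈ n.primeFactors.filter (fun q => q ≠ 2), (1 - (q:ℝ)⁻¹) = ∏ q ∈ n.primeFactors.filter (fun q => q ≠ 2), (1 - cq h q) := by
      refine Finset.prod_congr rfl fun q hq => ?_
      have hq' := Nat.mem_primeFactors.1 (Finset.mem_filter.1 hq).1
      have : ¬ q ∣ h := by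
        intro hd
        have := Nat.dvd_gcd hq'.2.1 hd
        rw [hg] at this
        exact hq'.1.one_lt.ne' (Nat.dvd_one.1 this)
      simp [cq, this]
    rw [h5]
    push_cast
    ring
  · obtain ⟨q, hq, hd⟩ := Nat.exists_prime_and_dvd hg
    have hqh : q ∣ h := hd.trans (Nat.gcd_dvd_right _ _)
    have hqn : q ∣ n := hd.trans (Nat.gcd_dvd_left _ _)
    symm
    refine Finset.prod_eq_zero (i := q) ?_ (by simp [cq, hqh])
    refine Finset.mem_filter.2 ⟨Nat.mem_primeFactors.2 ⟨hq, hqn, hn⟩, ?_⟩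
    rintro rfl
    exact (Nat.not_even_iff_odd.2 hh) (even_iff_two_dvd.2 hqh)

lemma natCast_eq_one_iff {p q : ℕ} (hp : 1 ≤ p) : (p : ZMod q) = 1 ↔ q ∣ p - 1 := by
  rw [← ZMod.natCast_eq_zero_iff, Nat.cast_sub hp, sub_eq_zero, Nat.cast_one]

/-- Comparison of truncated and complete product. -/
lemma trunc_compare {h Y p : ℕ} (hh : h ≠ 0) (hY : h ≤ Y) (hp : p.Prime) :
    |(∏ q ∈ (Nat.primesLE Y).filter (fun q => q ≠ 2), (1 - cq h q * (if (p : ZMod q) = 1 then 1 else 0)))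
      - ∏ q ∈ (p - 1).primeFactors.filter (fun q => q ≠ 2), (1 - cq h q)| ≤ ∑ q ∈ (p - 1).primeFactors with Y < q, (1 / q : ℝ) := by
  have hp1 : p - 1 ≠ 0 := by have := hp.two_le; omega
  set D := (p - 1).primeFactors.filter (fun q => q ≠ 2) with hD
  have e1 : ∏ q ∈ (Nat.primesLE Y).filter (fun q => q ≠ 2), (1 - cq h q * (if (p : ZMod q) = 1 then 1 else 0))
      = ∏ q ∈ D.filter (fun q => ¬ Y < q), (1 - cq h q) := by
    have : ∀ q, (1 - cq h q * (if (p : ZMod q) = 1 then 1 else 0)) = if (p : ZMod q) = 1 then 1 - cq h q else 1 := by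
      intro q; split_ifs <;> simp
    simp_rw [this]
    rw [← Finset.prod_filter]
    refine Finset.prod_congr ?_ fun _ _ => rfl
    ext q
    simp only [hD, Finset.mem_filter, Nat.mem_primesLE, Nat.mem_primeFactors, natCast_eq_one_iff hp.one_le]
    constructor
    · rintro ⟨⟨⟨a, b⟩, c⟩, d⟩; exact ⟨⟨⟨b, d, hp1⟩, c⟩, by omega⟩
    · rintro ⟨⟨⟨b, d, _⟩, c⟩, a⟩; exact ⟨⟨⟨by omega, b⟩, c⟩, d⟩
  have e2 := Finset.prod_filter_mul_prod_filter_not D (fun q => Y < q) (fun q => 1 - cq h q)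
  rw [e1, ← e2]
  set a := ∏ q ∈ D.filter (fun q => ¬ Y < q), (1 - cq h q)
  set b := ∏ q ∈ D.filter (fun q => Y < q), (1 - cq h q)
  have n1 : ∀ q, 0 ≤ 1 - cq h q := fun q => sub_nonneg.2 (cq_le_one h q)
  have n2 : ∀ q, 1 - cq h q ≤ 1 := fun q => by linarith [cq_nonneg h q]
  have ha0 : 0 ≤ a := Finset.prod_nonneg fun q _ => n1 q
  have ha1 : a ≤ 1 := Finset.prod_le_one (fun q _ => n1 q) (fun q _ => n2 q)
  have hb1 : b ≤ 1 := Finset.prod_le_one (fun q _ => n1 q) (fun q _ => n2 q)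
  have hb2 : 1 - ∑ q ∈ D.filter (fun q => Y < q), cq h q ≤ b := one_sub_sum_le _ _ (fun q _ => cq_nonneg h q) (fun q _ => cq_le_one h q)
  have hb3 : ∑ q ∈ D.filter (fun q => Y < q), cq h q ≤ ∑ q ∈ (p - 1).primeFactors with Y < q, (1 / q : ℝ) := by
    calc _ = ∑ q ∈ D.filter (fun q => Y < q), (1 / q : ℝ) := by
          refine Finset.sum_congr rfl fun q hq => ?_
          have hq2 := (Finset.mem_filter.1 hq).2
          have : ¬ q ∣ h := fun hd => by have := Nat.le_of_dvd (Nat.pos_of_ne_zero hh) hd; omega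
          simp [cq, this]
      _ ≤ _ := by
          refine Finset.sum_le_sum_of_subset_of_nonneg ?_ fun q _ _ => by positivity
          exact Finset.filter_subset_filter _ (Finset.filter_subset _ _)
  rw [show a - b * a = a * (1 - b) by ring, abs_of_nonneg (mul_nonneg ha0 (by linarith))]
  nlinarith
end PartG1

section PartG2
open Filter Topology

lemma prime_prod_tendsto (u : ℕ → ℝ) (hu : Summable fun n => |u n|) :
    Tendsto (fun Y => ∏ q ∈ Nat.primesLE Y, (1 + u q)) atTop (𝓝 (∏' p : Nat.Primes, (1 + u p))) := by
  classical
  let v : ℕ → ℝ := fun n => if n.Prime then u n else 0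
  have hv : Summable fun n => ‖v n‖ := by
    refine Summable.of_nonneg_of_le (fun n => norm_nonneg _) (fun n => ?_) hu
    simp only [v]
    split_ifs
    · exact le_of_eq (Real.norm_eq_abs _)
    · simp
  have hm : Multipliable fun n => 1 + v n := multipliable_one_add_of_summable hv
  have h1 := (hm.tendsto_prod_tprod_nat).comp (tendsto_add_atTop_nat 1)
  have h2 : ∏' p : Nat.Primes, (1 + u p) = ∏' n, (1 + v n) := by
    have := tprod_subtype {p : ℕ | p.Prime} (fun n => 1 + u n)
    refine Eq.trans this ?_
    congr 1
    ext n
    by_cases hn : n.Prime <;> simp [v, hn, Set.mulIndicator]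
  rw [h2]
  refine h1.congr fun Y => ?_
  simp only [Function.comp]
  have h3 : Nat.primesLE Y = (Finset.range (Y + 1)).filter Nat.Prime := by
    ext p; simp [Nat.mem_primesLE, Nat.lt_succ_iff]
  rw [h3, Finset.prod_filter]
  refine Finset.prod_congr rfl fun n _ => ?_
  by_cases hn : n.Prime <;> simp [v, hn]

lemma Ah_tendsto (h : ℕ) (hh : h ≠ 0) :
    Tendsto (fun Y => ∏ q ∈ Nat.primesLE Y, (1 - cq h q / ((q:ℝ) - 1))) atTop
      (𝓝 ((∏ p ∈ h.primeFactors, (1 - 1 / ((p : ℝ) - 1))) *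
          ∏' p : Nat.Primes, if (p : ℕ) ∣ h then (1 : ℝ) else
            1 - 1 / (((p : ℕ) : ℝ) * (((p : ℕ) : ℝ) - 1)))) := by
  let u : ℕ → ℝ := fun n => if n ∣ h then 0 else -(1 / ((n:ℝ) * ((n:ℝ) - 1)))
  have hu : Summable fun n => |u n| := by
    have h0 : Summable fun n : ℕ => 2 * (1 / (n:ℝ) ^ 2) := ((Real.summable_one_div_nat_pow).2 (by norm_num)).mul_left 2
    refine Summable.of_nonneg_of_le (fun n => abs_nonneg _) (fun n => ?_) h0
    simp only [u]
    split_ifs with hd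
    · simp
    · have hn1 : n ≠ 1 := by rintro rfl; exact hd (one_dvd h)
      rcases Nat.eq_zero_or_pos n with rfl | hn
      · simp
      have hn2 : (2:ℝ) ≤ n := by exact_mod_cast (show 2 ≤ n by omega)
      rw [abs_neg, abs_of_nonneg (by apply div_nonneg zero_le_one; nlinarith), mul_one_div, div_le_div_iff₀ (by nlinarith) (by positivity)]
      nlinarith
  have h1 := prime_prod_tendsto u hu
  have h2 : ∏' p : Nat.Primes, (1 + u p) = ∏' p : Nat.Primes, if (p : ℕ) ∣ h then (1 : ℝ) else
            1 - 1 / (((p : ℕ) : ℝ) * (((p : ℕ) : ℝ) - 1)) := by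
    congr 1
    ext p
    simp only [u]
    split_ifs <;> ring
  rw [← h2]
  refine (h1.const_mul _).congr' ?_
  filter_upwards [eventually_ge_atTop h] with Y hY
  have h3 : ∏ p ∈ h.primeFactors, (1 - 1 / ((p : ℝ) - 1)) = ∏ q ∈ Nat.primesLE Y, if q ∣ h then (1 - 1 / ((q : ℝ) - 1)) else 1 := by
    rw [← Finset.prod_filter]
    refine Finset.prod_congr ?_ fun _ _ => rfl
    ext q
    simp only [Nat.mem_primeFactors, Finset.mem_filter, Nat.mem_primesLE]
    constructor
    · rintro ⟨a, b, c⟩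
      exact ⟨⟨(Nat.le_of_dvd (Nat.pos_of_ne_zero hh) b).trans hY, a⟩, b⟩
    · rintro ⟨⟨a, b⟩, c⟩
      exact ⟨b, c, hh⟩
  rw [h3, ← Finset.prod_mul_distrib]
  refine Finset.prod_congr rfl fun q hq => ?_
  simp only [u, cq]
  split_ifs
  · ring
  · rw [div_div]; ring

lemma Ad_eq (h : ℕ) (g₁ : ℤ) (hg₁ : Squarefree g₁) (d : ℤ) (hd : d = if g₁ % 4 = 1 then g₁ else 4 * g₁) :
    1 - (ArithmeticFunction.moebius d.natAbs : ℝ) *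
          (∏ q ∈ d.natAbs.primeFactors.filter (fun q => q ∣ h), (1 / ((q : ℝ) - 2))) *
          (∏ q ∈ d.natAbs.primeFactors.filter (fun q => ¬ q ∣ h),
            (1 / ((q : ℝ) ^ 2 - q - 1))) =
    1 - (if g₁ % 4 = 1 then 1 else 0) * ∏ q ∈ g₁.natAbs.primeFactors.filter (fun q => q ≠ 2), (- cq h q / ((q:ℝ) - 1 - cq h q)) := by
  by_cases h4 : g₁ % 4 = 1
  · rw [if_pos h4] at hd
    rw [if_pos h4, one_mul, hd]
    congr 1
    have hf : g₁.natAbs.primeFactors.filter (fun q => q ≠ 2) = g₁.natAbs.primeFactors := by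
      refine Finset.filter_true_of_mem fun q hq => ?_
      rintro rfl
      have := Nat.dvd_of_mem_primeFactors hq
      omega
    have hmu : (ArithmeticFunction.moebius g₁.natAbs : ℝ) = ∏ q ∈ g₁.natAbs.primeFactors, (-1 : ℝ) := by
      have h1 := Nat.prod_primeFactors_of_squarefree (Int.squarefree_natAbs.2 hg₁)
      have h2 := ArithmeticFunction.isMultiplicative_moebius.map_prod_of_prime g₁.natAbs.primeFactors (fun p hp => Nat.prime_of_mem_primeFactors hp)
      rw [h1] at h2
      rw [h2]
      push_cast
      refine Finset.prod_congr rfl fun q hq => ?_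
      rw [ArithmeticFunction.moebius_apply_prime (Nat.prime_of_mem_primeFactors hq)]
      norm_num
    rw [hf, hmu, Finset.prod_filter, Finset.prod_filter, ← Finset.prod_mul_distrib, ← Finset.prod_mul_distrib]
    refine Finset.prod_congr rfl fun q hq => ?_
    have hq0 : (q:ℝ) ≠ 0 := by exact_mod_cast (Nat.prime_of_mem_primeFactors hq).ne_zero
    by_cases hqh : q ∣ h
    · simp only [hqh, if_true, cq, not_true, if_false, mul_one]
      rw [mul_one_div]
      congr 1
      ring
    · simp only [hqh, if_false, cq, not_false_iff, if_true, mul_one]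
      have : (q:ℝ) - 1 - 1 / q = (q ^ 2 - q - 1) / q := by field_simp
      rw [this, neg_div, div_div_div_cancel_right₀ hq0]
      ring
  · rw [if_neg h4] at hd
    rw [if_neg h4]
    have : ArithmeticFunction.moebius d.natAbs = 0 := by
      apply ArithmeticFunction.moebius_eq_zero_of_not_squarefree
      intro hs
      have := hs 2 ⟨g₁.natAbs, by rw [hd, Int.natAbs_mul]; rfl⟩
      simp at this
    rw [this]
    simp
end PartG2

section PartG3
open Filter Topology

noncomputable def chi (b e : Bool) (T : Finset ℕ) (p : ℕ) : ℝ :=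
  (((if b then ZMod.χ₄ (p : ZMod 4) else 1) * (if e then ZMod.χ₈ (p : ZMod 8) else 1) : ℤ) : ℝ) *
    ∏ q ∈ T, (jacobiSym p q : ℝ)

noncomputable def wq (h q p : ℕ) : ℝ := 1 - cq h q * (if (p : ZMod q) = 1 then 1 else 0)

lemma mean_trunc (h : ℕ) (hh : Odd h) (b e : Bool) (T : Finset ℕ) (hT : ∀ q ∈ T, q.Prime ∧ q ≠ 2) (Y : ℕ) (hY2 : 2 ≤ Y)
    (hTY : ∀ q ∈ T, q ≤ Y) :
    Tendsto (fun N : ℕ => (∑ p ∈ Nat.primesLE N, ((1 - chi b e T p) / 2 *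
      ∏ q ∈ (Nat.primesLE Y).filter (fun q => q ≠ 2), wq h q p) * Real.log p) / N) atTop
      (𝓝 ((∏ q ∈ Nat.primesLE Y, (1 - cq h q / ((q:ℝ) - 1))) *
        (1 - (if b || e then 0 else 1) * ∏ q ∈ T, (- cq h q / ((q:ℝ) - 1 - cq h q))))) := by
  set Q := (Nat.primesLE Y).filter (fun q => q ≠ 2) with hQ
  have hQp : ∀ q ∈ Q, q.Prime ∧ q ≠ 2 := fun q hq =>
    ⟨(Nat.mem_primesLE.1 (Finset.mem_filter.1 hq).1).2, (Finset.mem_filter.1 hq).2⟩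
  have hTQ : T ⊆ Q := fun q hq => Finset.mem_filter.2 ⟨Nat.mem_primesLE.2 ⟨hTY q hq, (hT q hq).1⟩, (hT q hq).2⟩
  have m1 := (PM.prod Q (fun q hq => (hQp q hq).1) (fun q p => wq h q p) (fun q => 1 - cq h q / ((q:ℝ) - 1))
    (fun q hq => PM.local1 (hQp q hq).1 (cq h q))).tendsto
  have m2' := PM.prod Q (fun q hq => (hQp q hq).1) (fun q p => wq h q p * if q ∈ T then (jacobiSym p q : ℝ) else 1)
    (fun q => if q ∈ T then - cq h q / ((q:ℝ) - 1) else 1 - cq h q / ((q:ℝ) - 1)) (by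
      intro q hq
      by_cases hqT : q ∈ T
      · simp only [hqT, if_true]
        exact PM.local2 (hQp q hq).1 (hQp q hq).2 _
      · simp only [hqT, if_false, mul_one]
        exact PM.local1 (hQp q hq).1 _)
  have m2 := ((PM.eight b e).mul m2' (by
    refine Nat.Coprime.prod_right fun q hq => ?_
    have : Nat.Coprime 2 q := (Nat.coprime_primes Nat.prime_two (hQp q hq).1).2 (hQp q hq).2.symm
    exact Nat.Coprime.pow_left 3 this)).tendsto
  have m3 := (m1.sub m2).div_const 2
  have hlim : (∏ q ∈ Q, (1 - cq h q / ((q:ℝ) - 1)) - (if b || e then 0 else 1) *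
      ∏ q ∈ Q, (if q ∈ T then - cq h q / ((q:ℝ) - 1) else 1 - cq h q / ((q:ℝ) - 1))) / 2 =
      (∏ q ∈ Nat.primesLE Y, (1 - cq h q / ((q:ℝ) - 1))) *
        (1 - (if b || e then 0 else 1) * ∏ q ∈ T, (- cq h q / ((q:ℝ) - 1 - cq h q))) := by
    have e1 : ∏ q ∈ Nat.primesLE Y, (1 - cq h q / ((q:ℝ) - 1)) = (∏ q ∈ Q, (1 - cq h q / ((q:ℝ) - 1))) / 2 := by
      rw [← Finset.prod_filter_mul_prod_filter_not (Nat.primesLE Y) (fun q => q ≠ 2), ← hQ]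
      have : (Nat.primesLE Y).filter (fun q => ¬ q ≠ 2) = {2} := by
        simp only [not_not, Finset.filter_eq']
        rw [if_pos (Nat.mem_primesLE.2 ⟨hY2, Nat.prime_two⟩)]
      rw [this, Finset.prod_singleton]
      have h2 : ¬ 2 ∣ h := fun hd => (Nat.not_even_iff_odd.2 hh) (even_iff_two_dvd.2 hd)
      simp only [cq, h2, if_false]
      norm_num
      ring
    have e2 : ∏ q ∈ Q, (if q ∈ T then - cq h q / ((q:ℝ) - 1) else 1 - cq h q / ((q:ℝ) - 1)) =
        (∏ q ∈ Q, (1 - cq h q / ((q:ℝ) - 1))) * ∏ q ∈ T, (- cq h q / ((q:ℝ) - 1 - cq h q)) := by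
      have e3 : ∏ q ∈ T, (- cq h q / ((q:ℝ) - 1 - cq h q)) = ∏ q ∈ Q, if q ∈ T then (- cq h q / ((q:ℝ) - 1 - cq h q)) else 1 := by
        rw [← Finset.prod_filter, Finset.filter_mem_eq_inter, Finset.inter_eq_right.2 hTQ]
      rw [e3, ← Finset.prod_mul_distrib]
      refine Finset.prod_congr rfl fun q hq => ?_
      split_ifs
      · have h3 : (3:ℝ) ≤ q := by
          have := (hQp q hq).1.two_le
          have := (hQp q hq).2
          exact_mod_cast (show 3 ≤ q by omega)
        have hc := cq_le_one h q
        have i1 : (q:ℝ) - 1 ≠ 0 := by linarith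
        have i2 : (q:ℝ) - 1 - cq h q ≠ 0 := by linarith
        field_simp
      · ring
    rw [e1, e2]
    ring
  rw [hlim] at m3
  refine m3.congr fun N => ?_
  rw [← sub_div, div_right_comm, ← Finset.sum_sub_distrib, Finset.sum_div]
  congr 1
  refine Finset.sum_congr rfl fun p _ => ?_
  have e4 : ∏ q ∈ Q, (wq h q p * if q ∈ T then (jacobiSym p q : ℝ) else 1) = (∏ q ∈ Q, wq h q p) * ∏ q ∈ T, (jacobiSym p q : ℝ) := by
    rw [Finset.prod_mul_distrib, ← Finset.prod_filter, Finset.filter_mem_eq_inter, Finset.inter_eq_right.2 hTQ]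
  rw [e4, chi]
  ring

lemma phi_eq (g : ℤ) (hg0 : g ≠ 0) (h : ℕ) (hh : Odd h) (g₁ : ℤ) (hker : ∃ m : ℤ, g = g₁ * m ^ 2)
    (b e : Bool)
    (hrec : ∀ p : ℕ, Odd p → jacobiSym g₁ p = (if b then ZMod.χ₄ (p : ZMod 4) else 1) * (if e then ZMod.χ₈ (p : ZMod 8) else 1) *
      ∏ q ∈ g₁.natAbs.primeFactors.filter (fun q => q ≠ 2), jacobiSym p q)
    (φg : ℕ → ℝ)
    (hφg : ∀ (p : ℕ) (hp : p.Prime),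
      φg p = if _ : Odd p ∧ ¬ (p : ℤ) ∣ g ∧
          (@legendreSym p ⟨hp⟩ g = -1 ∧ Nat.gcd (p - 1) h = 1)
        then 2 * ((p - 1).totient : ℝ) / ((p : ℝ) - 1) else 0)
    (p : ℕ) (hp : p.Prime) (hpP : max g.natAbs 2 < p) :
    φg p = (1 - chi b e (g₁.natAbs.primeFactors.filter (fun q => q ≠ 2)) p) / 2 *
      ∏ q ∈ (p - 1).primeFactors.filter (fun q => q ≠ 2), (1 - cq h q) ∧
    |(1 - chi b e (g₁.natAbs.primeFactors.filter (fun q => q ≠ 2)) p) / 2| ≤ 1 := by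
  have hp' := Fact.mk hp
  have hodd : Odd p := hp.odd_of_ne_two (by omega)
  have hndvd : ¬ (p : ℤ) ∣ g := by
    intro hd
    have := Nat.le_of_dvd (Int.natAbs_pos.2 hg0) (Int.natCast_dvd.1 hd)
    omega
  obtain ⟨m, hm⟩ := hker
  have hmp : ¬ (p : ℤ) ∣ m := fun hd => hndvd (hm ▸ (dvd_mul_of_dvd_right (hd.trans (dvd_pow_self m two_ne_zero)) g₁))
  have hgz : (g : ZMod p) ≠ 0 := by rwa [Ne, ZMod.intCast_zmod_eq_zero_iff_dvd]
  have hmz : (m : ZMod p) ≠ 0 := by rwa [Ne, ZMod.intCast_zmod_eq_zero_iff_dvd]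
  have hleg : legendreSym p g = jacobiSym g₁ p := by
    rw [jacobiSym.legendreSym.to_jacobiSym, hm, jacobiSym.mul_left, jacobiSym.pow_left, ← jacobiSym.legendreSym.to_jacobiSym p m, legendreSym.sq_one p hmz, mul_one]
  have hchi : chi b e (g₁.natAbs.primeFactors.filter (fun q => q ≠ 2)) p = (legendreSym p g : ℝ) := by
    rw [hleg, hrec p hodd, chi]
    push_cast
    rfl
  have htp := totient_part (n := p - 1) (h := h) (by omega) (by rcases hodd with ⟨k, hk⟩; omega) hh
  rw [Nat.cast_sub hp.one_le, Nat.cast_one] at htp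
  rw [hchi, ← htp, hφg p hp]
  rcases legendreSym.eq_one_or_neg_one p hgz with h1 | h1
  · simp [h1]
  · simp only [h1, hodd, hndvd, not_false_iff, true_and]
    split_ifs <;> norm_num
end PartG3

/-- For `g` not a perfect square, written as `g = g₀^h` with `h` maximal, and `d` the
discriminant of `ℚ(√g)`, the average `(1/N) ∑_{i=1}^N φ_g(p_i)` tends to
`A(g) = A_h · A_d`, where `φ_g(p) = 2 φ(p-1)/(p-1)` if `p` is odd, `p ∤ g`,
`(g/p) = -1` and `gcd(p-1, h) = 1`, and `φ_g(p) = 0` otherwise. -/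
theorem moree_summation_formula (g : ℤ) (hg : 1 < |g|) (hsq : ¬ IsSquare g)
    (g₀ : ℤ) (h : ℕ) (hgh : g = g₀ ^ h)
    (hmax : ∀ (b : ℤ) (m : ℕ), g = b ^ m → m ≤ h)
    (g₁ : ℤ) (hg₁ : Squarefree g₁) (hker : ∃ m : ℤ, g = g₁ * m ^ 2)
    (d : ℤ) (hd : d = if g₁ % 4 = 1 then g₁ else 4 * g₁)
    (φg : ℕ → ℝ)
    (hφg : ∀ (p : ℕ) (hp : p.Prime),
      φg p = if _ : Odd p ∧ ¬ (p : ℤ) ∣ g ∧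
          (@legendreSym p ⟨hp⟩ g = -1 ∧ Nat.gcd (p - 1) h = 1)
        then 2 * ((p - 1).totient : ℝ) / ((p : ℝ) - 1) else 0) :
    Tendsto (fun N : ℕ =>
        (1 / (N : ℝ)) * ∑ i ∈ Finset.range N, φg (Nat.nth Nat.Prime i))
      atTop
      (nhds (
        -- A_h
        ((∏ p ∈ h.primeFactors, (1 - 1 / ((p : ℝ) - 1))) *
          ∏' p : Nat.Primes, if (p : ℕ) ∣ h then (1 : ℝ) else
            1 - 1 / (((p : ℕ) : ℝ) * (((p : ℕ) : ℝ) - 1))) *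
        -- A_d
        (1 - (ArithmeticFunction.moebius d.natAbs : ℝ) *
          (∏ q ∈ d.natAbs.primeFactors.filter (fun q => q ∣ h), (1 / ((q : ℝ) - 2))) *
          (∏ q ∈ d.natAbs.primeFactors.filter (fun q => ¬ q ∣ h),
            (1 / ((q : ℝ) ^ 2 - q - 1)))))) := by
  have hg0 : g ≠ 0 := by rintro rfl; simp at hg
  have hh0 : h ≠ 0 := by
    rintro rfl
    rw [pow_zero] at hgh
    rw [hgh] at hg
    simp at hg
  have hhodd : Odd h := by
    rw [← Nat.not_even_iff_odd]
    rintro ⟨k, hk⟩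
    exact hsq ⟨g₀ ^ k, by rw [hgh, hk, pow_add]⟩
  obtain ⟨b, e, hbe, hrec⟩ := recip g₁ hg₁
  set T := g₁.natAbs.primeFactors.filter (fun q => q ≠ 2) with hT
  have hTp : ∀ q ∈ T, q.Prime ∧ q ≠ 2 := fun q hq =>
    ⟨Nat.prime_of_mem_primeFactors (Finset.mem_filter.1 hq).1, (Finset.mem_filter.1 hq).2⟩
  have hTle : ∀ q ∈ T, q ≤ g₁.natAbs := fun q hq =>
    Nat.le_of_mem_primeFactors (Finset.mem_filter.1 hq).1
  have hE : (if b || e then (0:ℝ) else 1) = if g₁ % 4 = 1 then 1 else 0 := by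
    by_cases h4 : g₁ % 4 = 1
    · rw [if_pos h4, hbe.2 h4]; simp
    · rw [if_neg h4]
      have : ¬ (b || e) = false := fun hf => h4 (hbe.1 hf)
      rw [Bool.not_eq_false] at this
      rw [this]; simp
  rw [Ad_eq h g₁ hg₁ d hd, ← hE, ← hT]
  refine final_avg (C := 2) ?_ ?_ (by norm_num) ?_
  · intro p hp
    rw [hφg p hp]
    have : (1:ℝ) ≤ p := by exact_mod_cast hp.one_le
    split_ifs
    · exact div_nonneg (by positivity) (by linarith)
    · exact le_rfl
  · intro p hp
    rw [hφg p hp]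
    have h2 : (2:ℝ) ≤ p := by exact_mod_cast hp.two_le
    split_ifs
    · rw [div_le_iff₀ (by linarith)]
      have h1 : ((p - 1).totient : ℝ) ≤ ((p - 1 : ℕ) : ℝ) := by exact_mod_cast Nat.totient_le (p - 1)
      rw [Nat.cast_sub hp.one_le, Nat.cast_one] at h1
      linarith
    · norm_num
  · refine mean_approx (fun Y p => (1 - chi b e T p) / 2 *
        ∏ q ∈ (Nat.primesLE Y).filter (fun q => q ≠ 2), wq h q p)
      (fun Y p => ∑ q ∈ (p - 1).primeFactors with Y < q, (1 / q : ℝ))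
      (fun Y => (∏ q ∈ Nat.primesLE Y, (1 - cq h q / ((q:ℝ) - 1))) *
        (1 - (if b || e then 0 else 1) * ∏ q ∈ T, (- cq h q / ((q:ℝ) - 1 - cq h q))))
      φg _ (max g.natAbs 2) (max (max h g₁.natAbs) 2) ?_ ?_ ?_ ?_ ?_
    · intro Y hY
      exact mean_trunc h hhodd b e T hTp Y (by omega) (fun q hq => (hTle q hq).trans (by omega))
    · exact (Ah_tendsto h hh0).mul_const _
    · intro Y hY p hp hpP
      obtain ⟨h1, h2⟩ := phi_eq g hg0 h hhodd g₁ hker b e hrec φg hφg p hp hpP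
      have h3 := trunc_compare (h := h) (Y := Y) (p := p) hh0 (by omega) hp
      simp only [h1, ← hT] at h2 ⊢
      rw [← mul_sub, abs_mul]
      calc _ ≤ 1 * |∏ q ∈ (Nat.primesLE Y).filter (fun q => q ≠ 2), wq h q p - ∏ q ∈ (p - 1).primeFactors.filter (fun q => q ≠ 2), (1 - cq h q)| := by gcongr
        _ ≤ _ := by rw [one_mul]; exact h3
    · intro Y p
      exact Finset.sum_nonneg fun q _ => by positivity
    · intro ε hε
      exact brun_tail hε
end
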